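/- arXiv:2305.12613 — 7 statements merged into one kernel-verified Lean document; each statement's English description precedes it below -/
import Mathlib

section
/- Fusion inequality: Let G be a finite abstract simplicial complex, K ⊆ G a subcomplex, and U = G \ K the open complement. Then for every p ≥ 0 the Betti numbers satisfy b_p(G) ≤ b_p(K) + b_p(U). -/
open Matrix

/-- A finite abstract simplicial complex: a finite nonempty collection of nonempty
finite subsets of ℕ closed under taking nonempty subsets. -/
def IsComplex (G : Finset (Finset ℕ)) : Prop :=
  G.Nonempty ∧ ∅ ∉ G ∧ ∀ x ∈ G, ∀ y : Finset ℕ, y ⊆ x → y.Nonempty → y ∈ G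

/-- A subcomplex: a set of sets closed under taking nonempty subsets. -/
def IsSubcomplex (K : Finset (Finset ℕ)) : Prop :=
  ∀ x ∈ K, ∀ y : Finset ℕ, y ⊆ x → y.Nonempty → y ∈ K

/-- The incidence sign s(x,y) = (-1)^i when y is obtained from x by deleting the
(i+1)-th smallest element of x. -/
noncomputable def incSign (x y : Finset ℕ) : ℝ :=
  (-1 : ℝ) ^ (x.filter (fun v => ∃ w ∈ x \ y, v < w)).card

/-- The exterior derivative matrix of a subset A of a simplicial complex. -/
noncomputable def extDer (A : Finset (Finset ℕ)) : Matrix A A ℝ :=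
  Matrix.of fun x y =>
    if (y : Finset ℕ) ⊆ (x : Finset ℕ) ∧ (x : Finset ℕ).card = (y : Finset ℕ).card + 1
    then incSign (x : Finset ℕ) (y : Finset ℕ) else 0

/-- The Dirac matrix D = d + dᵀ. -/
noncomputable def dirac (A : Finset (Finset ℕ)) : Matrix A A ℝ :=
  extDer A + (extDer A)ᵀ

/-- The Hodge Laplacian L = D². -/
noncomputable def hodge (A : Finset (Finset ℕ)) : Matrix A A ℝ :=
  dirac A * dirac A

/-- The block of the Hodge Laplacian acting on p-forms: the submatrix of L on
the p-simplices (sets of cardinality p+1). -/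
noncomputable def hodgeBlock (A : Finset (Finset ℕ)) (p : ℕ) :
    Matrix (A.filter fun x => x.card = p + 1) (A.filter fun x => x.card = p + 1) ℝ :=
  (hodge A).submatrix
    (fun x => ⟨x.1, (Finset.mem_filter.mp x.2).1⟩)
    (fun x => ⟨x.1, (Finset.mem_filter.mp x.2).1⟩)

/-- The p-th Betti number: the dimension of the kernel of the p-form block of the
Hodge Laplacian. -/
noncomputable def betti (A : Finset (Finset ℕ)) (p : ℕ) : ℕ :=
  Module.finrank ℝ (LinearMap.ker (Matrix.toLin' (hodgeBlock A p)))

theorem aux_block {m n m1 n1 m2 n2 : Type*} [Fintype m] [Fintype n] [Fintype m1] [Fintype n1]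
    [Fintype m2] [Fintype n2] (M : Matrix m n ℝ) (r1 : m1 → m) (c1 : n1 → n) (r2 : m2 → m)
    (c2 : n2 → n) (h : ∀ i j, M (r1 i) (c2 j) = 0) :
    (M.submatrix r1 c1).rank + (M.submatrix r2 c2).rank ≤ M.rank := by
  classical
  rw [rank_eq_finrank_span_cols, rank_eq_finrank_span_cols, rank_eq_finrank_span_cols]
  set S := Submodule.span ℝ (Set.range M.col) with hS
  set Q := LinearMap.funLeft ℝ ℝ r1
  set R := LinearMap.funLeft ℝ ℝ r2
  have e1 : Submodule.span ℝ (Set.range (M.submatrix r1 c1).col) ≤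
      LinearMap.range (Q.domRestrict S) := by
    rw [Submodule.span_le]
    rintro _ ⟨j, rfl⟩
    exact ⟨⟨M.col (c1 j), Submodule.subset_span ⟨_, rfl⟩⟩, rfl⟩
  have e2 : Submodule.span ℝ (Set.range (M.submatrix r2 c2).col) ≤
      (LinearMap.ker (Q.domRestrict S)).map (R.domRestrict S) := by
    rw [Submodule.span_le]
    rintro _ ⟨j, rfl⟩
    refine ⟨⟨M.col (c2 j), Submodule.subset_span ⟨_, rfl⟩⟩, ?_, rfl⟩
    simp only [SetLike.mem_coe, LinearMap.mem_ker]
    ext i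
    exact h i j
  have h1 := Submodule.finrank_mono e1
  have h2 := Submodule.finrank_mono e2
  have h3 := Submodule.finrank_map_le (R.domRestrict S) (LinearMap.ker (Q.domRestrict S))
  have h4 := (Q.domRestrict S).finrank_range_add_finrank_ker
  omega

theorem aux_rank_add {m n : Type*} [Fintype m] [Fintype n] (A B : Matrix m n ℝ) :
    (A + B).rank ≤ A.rank + B.rank := by
  unfold Matrix.rank
  refine le_trans (Submodule.finrank_mono ?_) (Submodule.finrank_add_le_finrank_add_finrank _ _)
  rw [Matrix.mulVecLin_add]
  exact LinearMap.range_add_le _ _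

theorem aux_rank_ge {m n k : Type*} [Fintype m] [Fintype n] [Fintype k]
    (P : Matrix m n ℝ) (Q : Matrix n k ℝ) (h : P * Q = 0) :
    P.rank + Q.rank ≤ (Pᵀ * P + Q * Qᵀ).rank := by
  classical
  have e : Pᵀ * P + Q * Qᵀ = (fromRows P Qᵀ)ᵀ * fromRows P Qᵀ := by
    rw [transpose_fromRows, fromCols_mul_fromRows, transpose_transpose]
  rw [e, rank_transpose_mul_self, ← rank_self_mul_transpose (fromRows P Qᵀ)]
  have e2 : fromRows P Qᵀ * (fromRows P Qᵀ)ᵀ = fromBlocks (P * Pᵀ) 0 0 (Qᵀ * Q) := by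
    rw [transpose_fromRows, fromRows_mul_fromCols, transpose_transpose, h,
      ← transpose_mul, h, transpose_zero]
  rw [e2]
  have := aux_block (fromBlocks (P * Pᵀ) 0 0 (Qᵀ * Q)) Sum.inl Sum.inl Sum.inr Sum.inr
    (by intro i j; rfl)
  rw [← rank_self_mul_transpose P, ← rank_transpose_mul_self Q]
  exact this

/-- the inclusion of p-simplices -/
def aInc (A : Finset (Finset ℕ)) (p : ℕ) (x : A.filter fun x => x.card = p + 1) : A :=
  ⟨x.1, (Finset.mem_filter.mp x.2).1⟩

/-- outgoing part -/
noncomputable def aP (A : Finset (Finset ℕ)) (p : ℕ) :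
    Matrix A (A.filter fun x => x.card = p + 1) ℝ := (extDer A).submatrix id (aInc A p)

/-- incoming part -/
noncomputable def aQ (A : Finset (Finset ℕ)) (p : ℕ) :
    Matrix (A.filter fun x => x.card = p + 1) A ℝ := (extDer A).submatrix (aInc A p) id

theorem aux_hodge (A : Finset (Finset ℕ)) (p : ℕ) :
    hodgeBlock A p = (aP A p)ᵀ * aP A p + aQ A p * (aQ A p)ᵀ := by
  ext x y
  have hx : x.1.card = p + 1 := (Finset.mem_filter.mp x.2).2
  have hy : y.1.card = p + 1 := (Finset.mem_filter.mp y.2).2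
  simp only [hodgeBlock, hodge, dirac, aP, aQ, aInc, submatrix_apply, mul_apply, Matrix.add_apply,
    transpose_apply, id, ← Finset.sum_add_distrib]
  refine Finset.sum_congr rfl fun z _ => ?_
  simp only [extDer, of_apply]
  rw [hx, hy]
  split_ifs <;> first | (exfalso; omega) | ring

theorem aux_betti (A : Finset (Finset ℕ)) (p : ℕ) :
    betti A p + (hodgeBlock A p).rank = (A.filter fun x => x.card = p + 1).card := by
  have := (Matrix.toLin' (hodgeBlock A p)).finrank_range_add_finrank_ker
  simp only [Module.finrank_fintype_fun_eq_card, Fintype.card_coe] at this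
  rw [← this, add_comm]
  rfl

theorem aux_sq_sum (x z : Finset ℕ) (a b : ℕ) (hab : a < b) (ha : a ∉ z) (hb : b ∉ z)
    (hx : x = insert a (insert b z)) :
    incSign x (insert a z) * incSign (insert a z) z +
      incSign x (insert b z) * incSign (insert b z) z = 0 := by
  subst hx
  have d1 : insert a (insert b z) \ insert a z = {b} := by grind
  have d2 : insert a z \ z = {a} := by grind
  have d3 : insert a (insert b z) \ insert b z = {a} := by grind
  have d4 : insert b z \ z = {b} := by grind
  unfold incSign
  simp only [d1, d2, d3, d4, Finset.mem_singleton, exists_eq_left]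
  have f1 : (insert a (insert b z)).filter (· < b) = insert a (z.filter (· < b)) := by grind
  have f2 : (insert a z).filter (· < a) = z.filter (· < a) := by grind
  have f3 : (insert a (insert b z)).filter (· < a) = z.filter (· < a) := by grind
  have f4 : (insert b z).filter (· < b) = z.filter (· < b) := by grind
  rw [f1, f2, f3, f4, Finset.card_insert_of_notMem (by simp [ha])]
  ring

theorem aux_sq (G : Finset (Finset ℕ)) (hG : IsComplex G) (p : ℕ) : aP G p * aQ G p = 0 := by
  classical
  ext x z
  obtain ⟨x, hx⟩ := x
  obtain ⟨z, hz⟩ := z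
  simp only [aP, aQ, aInc, mul_apply, submatrix_apply, id, extDer, of_apply, Matrix.zero_apply]
  rw [Finset.sum_coe_sort (G.filter fun x => x.card = p + 1) (fun y =>
    (if y ⊆ x ∧ x.card = y.card + 1 then incSign x y else 0) *
    (if z ⊆ y ∧ y.card = z.card + 1 then incSign y z else 0))]
  by_cases h : z ⊆ x ∧ x.card = p + 2 ∧ z.card = p
  · obtain ⟨hzx, hxc, hzc⟩ := h
    have hc : (x \ z).card = 2 := by
      rw [Finset.card_sdiff_of_subset hzx]; omega
    obtain ⟨a, b, hab, hd⟩ : ∃ a b, a < b ∧ x \ z = {a, b} := by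
      obtain ⟨a, b, hne, hd⟩ := Finset.card_eq_two.mp hc
      rcases lt_or_gt_of_ne hne with h | h
      · exact ⟨a, b, h, hd⟩
      · exact ⟨b, a, h, by rw [hd, Finset.pair_comm]⟩
    have ha : a ∈ x \ z := by rw [hd]; simp
    have hb : b ∈ x \ z := by rw [hd]; simp
    rw [Finset.mem_sdiff] at ha hb
    have hxe : x = insert a (insert b z) := by
      rw [← Finset.sdiff_union_of_subset hzx, hd]
      ext; simp
    have hne : insert a z ≠ insert b z := by
      intro h
      have : a ∈ insert b z := h ▸ Finset.mem_insert_self a z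
      simp [ha.2] at this
      omega
    have ca : (insert a z).card = p + 1 := by rw [Finset.card_insert_of_notMem ha.2, hzc]
    have cb : (insert b z).card = p + 1 := by rw [Finset.card_insert_of_notMem hb.2, hzc]
    have sa : insert a z ⊆ x := Finset.insert_subset ha.1 hzx
    have sb : insert b z ⊆ x := Finset.insert_subset hb.1 hzx
    have ma := hG.2.2 x hx _ sa (Finset.insert_nonempty _ _)
    have mb := hG.2.2 x hx _ sb (Finset.insert_nonempty _ _)
    rw [← Finset.sum_subset (s₁ := {insert a z, insert b z})]
    · rw [Finset.sum_pair hne]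
      simp only [sa, sb, ca, cb, hxc, hzc, Finset.subset_insert, and_self, if_true]
      exact aux_sq_sum x z a b hab ha.2 hb.2 hxe
    · intro y hy
      simp only [Finset.mem_insert, Finset.mem_singleton] at hy
      rcases hy with rfl | rfl <;> simp [*]
    · intro y hy hy'
      by_contra hcon
      have h1 : y ⊆ x := by
        by_contra h; simp [h] at hcon
      have h2 : z ⊆ y := by
        by_contra h; simp [h] at hcon
      have hyc := (Finset.mem_filter.mp hy).2
      have : (y \ z).card = 1 := by
        rw [Finset.card_sdiff_of_subset h2]; omega
      obtain ⟨c, hcc⟩ := Finset.card_eq_one.mp this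
      have hye : y = insert c z := by
        rw [← Finset.sdiff_union_of_subset h2, hcc]; rfl
      have : c ∈ x \ z := by
        have : c ∈ y \ z := by rw [hcc]; simp
        exact Finset.sdiff_subset_sdiff h1 le_rfl this
      rw [hd] at this
      simp only [Finset.mem_insert, Finset.mem_singleton] at this hy'
      rcases this with rfl | rfl <;> simp [hye] at hy'
  · refine Finset.sum_eq_zero fun y hy => ?_
    have hyc := (Finset.mem_filter.mp hy).2
    by_contra hcon
    apply h
    have h1 : y ⊆ x ∧ x.card = y.card + 1 := by
      by_contra h; simp [h] at hcon
    have h2 : z ⊆ y ∧ y.card = z.card + 1 := by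
      by_contra h; simp [h] at hcon
    exact ⟨h2.1.trans h1.1, by omega, by omega⟩

/-- **Fusion inequality.** If K is a subcomplex of the finite abstract simplicial
complex G and U = G \ K is the open complement, then b_p(G) ≤ b_p(K) + b_p(U). -/
theorem fusion_inequality (G K : Finset (Finset ℕ)) (hG : IsComplex G)
    (hKG : K ⊆ G) (hK : IsSubcomplex K) (p : ℕ) :
    betti G p ≤ betti K p + betti (G \ K) p := by
  have hU : G \ K ⊆ G := Finset.sdiff_subset
  have key : ∀ x ∈ K, ∀ y ∈ G \ K, ¬ (y ⊆ x ∧ x.card = y.card + 1) := by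
    intro x hx y hy hh
    rw [Finset.mem_sdiff] at hy
    refine hy.2 (hK x hx y hh.1 (Finset.nonempty_iff_ne_empty.mpr ?_))
    rintro rfl
    exact hG.2.1 hy.1
  let i1 : K → G := fun x => ⟨x.1, hKG x.2⟩
  let i2 : (G \ K : Finset _) → G := fun x => ⟨x.1, hU x.2⟩
  let j1 : (K.filter fun x => x.card = p + 1) → (G.filter fun x => x.card = p + 1) :=
    fun x => ⟨x.1, Finset.filter_subset_filter _ hKG x.2⟩
  let j2 : ((G \ K).filter fun x => x.card = p + 1) → (G.filter fun x => x.card = p + 1) :=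
    fun x => ⟨x.1, Finset.filter_subset_filter _ hU x.2⟩
  have r1 : (aP K p).rank + (aP (G \ K) p).rank ≤ (aP G p).rank :=
    aux_block (aP G p) i1 j1 i2 j2
      (fun i j => if_neg (key _ i.2 _ (Finset.mem_filter.mp j.2).1))
  have r2 : (aQ K p).rank + (aQ (G \ K) p).rank ≤ (aQ G p).rank :=
    aux_block (aQ G p) j1 i1 j2 i2
      (fun i j => if_neg (key _ (Finset.mem_filter.mp i.2).1 _ j.2))
  have up : ∀ A, (hodgeBlock A p).rank ≤ (aP A p).rank + (aQ A p).rank := by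
    intro A
    rw [aux_hodge]
    refine (aux_rank_add _ _).trans ?_
    rw [rank_transpose_mul_self, rank_self_mul_transpose]
  have lo : (aP G p).rank + (aQ G p).rank ≤ (hodgeBlock G p).rank := by
    rw [aux_hodge]
    exact aux_rank_ge _ _ (aux_sq G hG p)
  have cd : (G.filter fun x => x.card = p + 1).card = (K.filter fun x => x.card = p + 1).card +
      ((G \ K).filter fun x => x.card = p + 1).card := by
    rw [← Finset.card_union_of_disjoint (Finset.disjoint_filter_filter Finset.disjoint_sdiff),
      ← Finset.filter_union, Finset.union_sdiff_of_subset hKG]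
  have b1 := aux_betti G p
  have b2 := aux_betti K p
  have b3 := aux_betti (G \ K) p
  have u1 := up K
  have u2 := up (G \ K)
  omega
end

section
/- Euler–Poincaré formula for open and closed sets: Let G be a finite abstract simplicial complex, K ⊆ G a subcomplex and U = G \ K (the case K = ∅, U = G includes the classical closed case). Then Σ_{p≥0} (−1)^p f_p(U) = Σ_{p≥0} (−1)^p b_p(U), where f_p(U) is the number of p-simplices in U and b_p(U) is the p-th Betti number of U. -/
open Matrix

/-- The number of p-simplices in a set of sets A. -/
def fvec (A : Finset (Finset ℕ)) (p : ℕ) : ℕ :=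
  (A.filter fun x => x.card = p + 1).card

def epProdEquiv {V W : Type} [AddCommGroup V] [AddCommGroup W] [Module ℝ V] [Module ℝ W]
    (p : Submodule ℝ V) (q : Submodule ℝ W) : (p.prod q) ≃ₗ[ℝ] p × q where
  toFun x := (⟨x.1.1, x.2.1⟩, ⟨x.1.2, x.2.2⟩)
  invFun x := ⟨(x.1.1, x.2.1), ⟨x.1.2, x.2.2⟩⟩
  map_add' _ _ := rfl
  map_smul' _ _ := rfl
  left_inv _ := rfl
  right_inv _ := rfl

theorem ep_rank_blocks {m n m' n' : Type} [Fintype m] [Fintype n] [Fintype m'] [Fintype n']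
    (A : Matrix m n ℝ) (D : Matrix m' n' ℝ) :
    (Matrix.fromBlocks A 0 0 D).rank = A.rank + D.rank := by
  let e := LinearEquiv.sumArrowLequivProdArrow m m' ℝ ℝ
  have h : (LinearMap.range (Matrix.fromBlocks A 0 0 D).mulVecLin).map e.toLinearMap =
      (LinearMap.range A.mulVecLin).prod (LinearMap.range D.mulVecLin) := by
    ext ⟨u, v⟩
    constructor
    · rintro ⟨_, ⟨w, rfl⟩, hw⟩
      have h1 := congrArg Prod.fst hw
      have h2 := congrArg Prod.snd hw
      refine ⟨⟨w ∘ Sum.inl, ?_⟩, ⟨w ∘ Sum.inr, ?_⟩⟩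
      · rw [← h1]; ext i
        simp [e, Matrix.fromBlocks_mulVec, LinearEquiv.sumArrowLequivProdArrow]
      · rw [← h2]; ext i
        simp [e, Matrix.fromBlocks_mulVec, LinearEquiv.sumArrowLequivProdArrow]
    · rintro ⟨⟨a, ha⟩, ⟨b, hb⟩⟩
      refine ⟨_, ⟨Sum.elim a b, rfl⟩, ?_⟩
      simp only [Matrix.mulVecLin_apply] at ha hb
      refine Prod.ext ?_ ?_
      · ext i
        simp [e, Matrix.fromBlocks_mulVec, LinearEquiv.sumArrowLequivProdArrow, ← ha]
      · ext i
        simp [e, Matrix.fromBlocks_mulVec, LinearEquiv.sumArrowLequivProdArrow, ← hb]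
  have h2 := LinearEquiv.finrank_map_eq e (LinearMap.range (Matrix.fromBlocks A 0 0 D).mulVecLin)
  unfold Matrix.rank
  rw [← h2]
  erw [h]
  rw [LinearEquiv.finrank_eq (epProdEquiv _ _), Module.finrank_prod]

theorem ep_rank_lap {a b c : Type} [Fintype a] [Fintype b] [Fintype c]
    (P : Matrix c b ℝ) (Q : Matrix b a ℝ) (h : P * Q = 0) :
    (Pᵀ * P + Q * Qᵀ).rank = P.rank + Q.rank := by
  have h1 : Pᵀ * P + Q * Qᵀ = (Matrix.fromRows P Qᵀ)ᵀ * Matrix.fromRows P Qᵀ := by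
    rw [Matrix.transpose_fromRows, Matrix.fromCols_mul_fromRows, Matrix.transpose_transpose]
  have h3 : Qᵀ * Pᵀ = 0 := by rw [← Matrix.transpose_mul, h, Matrix.transpose_zero]
  have h2 : Matrix.fromRows P Qᵀ * (Matrix.fromRows P Qᵀ)ᵀ
      = Matrix.fromBlocks (P * Pᵀ) 0 0 (Qᵀ * Q) := by
    rw [Matrix.transpose_fromRows, Matrix.fromRows_mul_fromCols, Matrix.transpose_transpose, h, h3]
  rw [h1, Matrix.rank_transpose_mul_self, ← Matrix.rank_self_mul_transpose, h2, ep_rank_blocks,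
    Matrix.rank_self_mul_transpose, Matrix.rank_transpose_mul_self]

noncomputable def epS (x y : Finset ℕ) : ℝ :=
  if y ⊆ x ∧ x.card = y.card + 1 then incSign x y else 0

theorem epS_ne {x y : Finset ℕ} (h : x.card ≠ y.card + 1) : epS x y = 0 := by
  unfold epS; rw [if_neg]; tauto

theorem epS_insert (z : Finset ℕ) (w : ℕ) (h : w ∉ z) :
    epS (insert w z) z = (-1 : ℝ) ^ (z.filter (· < w)).card := by
  unfold epS
  rw [if_pos ⟨Finset.subset_insert _ _, Finset.card_insert_of_notMem h⟩]
  unfold incSign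
  congr 2
  ext v
  simp only [Finset.mem_filter, Finset.mem_insert, Finset.mem_sdiff]
  constructor
  · rintro ⟨h1, u, ⟨h2, h3⟩, h4⟩
    have : u = w := by tauto
    subst this
    refine ⟨?_, h4⟩
    rcases h1 with h1 | h1
    · omega
    · exact h1
  · rintro ⟨h1, h2⟩
    exact ⟨Or.inr h1, w, ⟨Or.inl rfl, h⟩, h2⟩

theorem epS_sq (A : Finset (Finset ℕ)) (x z : Finset ℕ)
    (hA : ∀ y, z ⊆ y → y ⊆ x → y ∈ A) (hc : x.card = z.card + 2) :
    ∑ y ∈ A, epS x y * epS y z = 0 := by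
  by_cases hzx : z ⊆ x
  swap
  · apply Finset.sum_eq_zero
    intro y _
    unfold epS
    split_ifs with h1 h2
    · exact absurd (h2.1.trans h1.1) hzx
    all_goals simp
  have hd : (x \ z).card = 2 := by
    rw [Finset.card_sdiff_of_subset hzx]; omega
  have key : ∃ a b, a < b ∧ x \ z = {a, b} := by
    obtain ⟨a, b, hab, h⟩ := Finset.card_eq_two.mp hd
    rcases lt_or_gt_of_ne hab with h' | h'
    · exact ⟨a, b, h', h⟩
    · exact ⟨b, a, h', by rw [h, Finset.pair_comm]⟩
  obtain ⟨a, b, hab, h⟩ := key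
  have ha : a ∈ x \ z := by rw [h]; simp
  have hb : b ∈ x \ z := by rw [h]; simp
  rw [Finset.mem_sdiff] at ha hb
  have hx1 : x = insert a (insert b z) := by
    rw [← Finset.sdiff_union_of_subset hzx, h]; ext; simp
  have hx2 : x = insert b (insert a z) := by
    rw [hx1, Finset.insert_comm]
  have hne : insert a z ≠ insert b z := by
    intro e
    have : a ∈ insert b z := e ▸ Finset.mem_insert_self a z
    rw [Finset.mem_insert] at this
    rcases this with h | h
    · omega
    · exact ha.2 h
  have hsub : ({insert a z, insert b z} : Finset (Finset ℕ)) ⊆ A := by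
    intro y hy
    simp only [Finset.mem_insert, Finset.mem_singleton] at hy
    rcases hy with rfl | rfl
    · exact hA _ (Finset.subset_insert _ _) (Finset.insert_subset ha.1 hzx)
    · exact hA _ (Finset.subset_insert _ _) (Finset.insert_subset hb.1 hzx)
  rw [← Finset.sum_subset hsub, Finset.sum_pair hne]
  · rw [epS_insert z a ha.2, epS_insert z b hb.2]
    have e1 : epS x (insert a z) = (-1 : ℝ) ^ ((z.filter (· < b)).card + 1) := by
      rw [hx2, epS_insert _ b (by simp [hb.2]; omega), Finset.filter_insert, if_pos hab,
        Finset.card_insert_of_notMem (by simp [ha.2])]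
    have e2 : epS x (insert b z) = (-1 : ℝ) ^ ((z.filter (· < a)).card) := by
      rw [hx1, epS_insert _ a (by simp [ha.2]; omega), Finset.filter_insert, if_neg (by omega)]
    rw [e1, e2]
    ring
  · intro y _ hy
    unfold epS
    split_ifs with h1 h2
    · exfalso
      apply hy
      have hyc : (y \ z).card = 1 := by rw [Finset.card_sdiff_of_subset h2.1]; omega
      obtain ⟨w, hw⟩ := Finset.card_eq_one.mp hyc
      have hyw : y = insert w z := by
        rw [← Finset.sdiff_union_of_subset h2.1, hw]; ext; simp
      have hw' : w ∈ x \ z := Finset.sdiff_subset_sdiff h1.1 (le_refl z) (by rw [hw]; simp)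
      rw [h] at hw'
      simp only [Finset.mem_insert, Finset.mem_singleton] at hw' ⊢
      rcases hw' with rfl | rfl
      · exact Or.inl hyw
      · exact Or.inr hyw
    all_goals simp

noncomputable def epB (A : Finset (Finset ℕ)) (n : ℕ) :
    Matrix (A.filter fun x => x.card = n + 1) (A.filter fun x => x.card = n) ℝ :=
  Matrix.of fun x y => epS x.1 y.1

theorem ep_sum_filter (A : Finset (Finset ℕ)) (n : ℕ) (f : Finset ℕ → ℝ)
    (hf : ∀ x, x.card ≠ n → f x = 0) :
    ∑ x : (A.filter fun x => x.card = n), f x.1 = ∑ x ∈ A, f x := by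
  rw [Finset.sum_coe_sort (A.filter fun x => x.card = n) f, Finset.sum_filter]
  apply Finset.sum_congr rfl
  intro x _
  split_ifs with h
  · rfl
  · exact (hf x h).symm

theorem epB_sq (A : Finset (Finset ℕ)) (hA : ∀ x ∈ A, ∀ z ∈ A, ∀ y, z ⊆ y → y ⊆ x → y ∈ A)
    (n : ℕ) : epB A (n + 1) * epB A n = 0 := by
  ext x z
  have hx := Finset.mem_filter.mp x.2
  have hz := Finset.mem_filter.mp z.2
  simp only [Matrix.mul_apply, epB, Matrix.of_apply, Matrix.zero_apply]
  rw [ep_sum_filter A (n + 1) (fun y => epS x.1 y * epS y z.1)]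
  · exact epS_sq A _ _ (hA _ hx.1 _ hz.1) (by omega)
  · intro y hy
    rw [epS_ne (x := y) (by omega), mul_zero]

theorem ep_block (A : Finset (Finset ℕ)) (p : ℕ) :
    hodgeBlock A p = (epB A (p + 1))ᵀ * epB A (p + 1) + epB A p * (epB A p)ᵀ := by
  ext x y
  have hx := Finset.mem_filter.mp x.2
  have hy := Finset.mem_filter.mp y.2
  simp only [Matrix.mul_apply, Matrix.add_apply, Matrix.transpose_apply, epB, Matrix.of_apply]
  rw [ep_sum_filter A (p + 1 + 1) (fun z => epS z x.1 * epS z y.1),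
    ep_sum_filter A p (fun z => epS x.1 z * epS y.1 z), ← Finset.sum_add_distrib]
  · simp only [hodgeBlock, hodge, dirac, Matrix.submatrix_apply, Matrix.mul_apply,
      Matrix.add_apply, Matrix.transpose_apply, extDer, Matrix.of_apply]
    change ∑ z : A, (epS x.1 z.1 + epS z.1 x.1) * (epS z.1 y.1 + epS y.1 z.1) = _
    rw [Finset.sum_coe_sort A
      (fun z => (epS x.1 z + epS z x.1) * (epS z y.1 + epS y.1 z))]
    apply Finset.sum_congr rfl
    intro z _
    have h1 : epS x.1 z * epS z y.1 = 0 := by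
      by_cases h : z.card = p
      · rw [epS_ne (x := z) (by omega), mul_zero]
      · rw [epS_ne (x := x.1) (by omega), zero_mul]
    have h2 : epS z x.1 * epS y.1 z = 0 := by
      by_cases h : z.card = p
      · rw [epS_ne (x := z) (by omega), zero_mul]
      · rw [epS_ne (x := y.1) (by omega), mul_zero]
    linear_combination h1 + h2
  · intro z hz
    rw [epS_ne (x := x.1) (by omega), zero_mul]
  · intro z hz
    rw [epS_ne (x := z) (by omega), zero_mul]

theorem ep_betti (A : Finset (Finset ℕ)) (hA : ∀ x ∈ A, ∀ z ∈ A, ∀ y, z ⊆ y → y ⊆ x → y ∈ A)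
    (p : ℕ) : (epB A (p + 1)).rank + (epB A p).rank + betti A p = fvec A p := by
  have h := LinearMap.finrank_range_add_finrank_ker (Matrix.toLin' (hodgeBlock A p))
  have h2 : Module.finrank ℝ (LinearMap.range (Matrix.toLin' (hodgeBlock A p)))
      = (hodgeBlock A p).rank := rfl
  rw [h2, ep_block, ep_rank_lap _ _ (epB_sq A hA p), ← ep_block] at h
  unfold betti fvec
  rw [h]
  simp

theorem euler_poincare (G K : Finset (Finset ℕ)) (hG : IsComplex G)
    (hKG : K ⊆ G) (hK : IsSubcomplex K) :
    ∑ p ∈ Finset.range (G.sup Finset.card), (-1 : ℤ) ^ p * (fvec (G \ K) p : ℤ) =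
      ∑ p ∈ Finset.range (G.sup Finset.card), (-1 : ℤ) ^ p * (betti (G \ K) p : ℤ) := by
  obtain ⟨_, hG0, hGc⟩ := hG
  have hA : ∀ x ∈ G \ K, ∀ z ∈ G \ K, ∀ y, z ⊆ y → y ⊆ x → y ∈ G \ K := by
    intro x hx z hz y hzy hyx
    rw [Finset.mem_sdiff] at *
    have hzn : z.Nonempty := by
      rw [Finset.nonempty_iff_ne_empty]; rintro rfl; exact hG0 hz.1
    exact ⟨hGc x hx.1 y hyx (hzn.mono hzy), fun h => hz.2 (hK y h z hzy hzn)⟩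
  have h0 : (epB (G \ K) 0).rank = 0 := by
    have h := Matrix.rank_le_card_width (epB (G \ K) 0)
    have : (G \ K).filter (fun x => x.card = 0) = ∅ := by
      rw [Finset.filter_eq_empty_iff]
      intro x hx hc
      rw [Finset.card_eq_zero] at hc
      subst hc
      exact hG0 (Finset.mem_sdiff.mp hx).1
    rw [Fintype.card_coe] at h
    have h' := h.trans_eq (congrArg Finset.card this)
    rw [Finset.card_empty] at h'
    omega
  have hN : (epB (G \ K) (G.sup Finset.card)).rank = 0 := by
    have h := Matrix.rank_le_card_height (epB (G \ K) (G.sup Finset.card))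
    have : (G \ K).filter (fun x => x.card = G.sup Finset.card + 1) = ∅ := by
      rw [Finset.filter_eq_empty_iff]
      intro x hx hc
      have := Finset.le_sup (f := Finset.card) (Finset.mem_sdiff.mp hx).1
      omega
    rw [Fintype.card_coe] at h
    have h' := h.trans_eq (congrArg Finset.card this)
    rw [Finset.card_empty] at h'
    omega
  have key : ∀ n, ∑ p ∈ Finset.range n, (-1 : ℤ) ^ p * (fvec (G \ K) p : ℤ) =
      ∑ p ∈ Finset.range n, (-1 : ℤ) ^ p * (betti (G \ K) p : ℤ)
        - (-1 : ℤ) ^ n * ((epB (G \ K) n).rank : ℤ) := by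
    intro n
    induction n with
    | zero => simp [h0]
    | succ n ih =>
      rw [Finset.sum_range_succ, Finset.sum_range_succ, ih, ← ep_betti _ hA n]
      push_cast
      ring
  rw [key, hN]
  simp
end

section
/- Realization of Betti vectors by open sets: For every finite sequence (β_0, β_1, …, β_q) of nonnegative integers there exist a finite abstract simplicial complex G and a subcomplex K ⊆ G such that the open complement U = G \ K satisfies b_p(U) = β_p for 0 ≤ p ≤ q and b_p(U) = 0 for p > q. -/
open Matrix

/-- The simplex labelled `(p, j)`. -/
def simp0 (p j : ℕ) : Finset ℕ :=
  (Finset.range (p + 1)).image (fun i => Nat.pair (Nat.pair p j) i + 1)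

lemma simp0_card (p j : ℕ) : (simp0 p j).card = p + 1 := by
  unfold simp0
  rw [Finset.card_image_of_injective, Finset.card_range]
  intro a b h
  simpa using h

lemma simp0_nonempty (p j : ℕ) : (simp0 p j).Nonempty := by
  rw [← Finset.card_pos, simp0_card]; omega

lemma simp0_inj {p j p' j' : ℕ} (z : ℕ) (h : z ∈ simp0 p j) (h' : z ∈ simp0 p' j') :
    p = p' ∧ j = j' := by
  simp only [simp0, Finset.mem_image] at h h'
  obtain ⟨a, -, rfl⟩ := h
  obtain ⟨b, -, hb⟩ := h'
  simp only [Nat.add_right_cancel_iff, Nat.pair_eq_pair] at hb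
  exact ⟨hb.1.1.symm, hb.1.2.symm⟩

/-- The family of facets. -/
def facets (q : ℕ) (β : ℕ → ℕ) : Finset (Finset ℕ) :=
  (Finset.range (q + 1)).biUnion fun p => (Finset.range (β p)).image (simp0 p)

lemma mem_facets {q : ℕ} {β : ℕ → ℕ} {x : Finset ℕ} :
    x ∈ facets q β ↔ ∃ p ≤ q, ∃ j < β p, simp0 p j = x := by
  simp [facets, Nat.lt_succ_iff]

lemma facets_anti {q : ℕ} {β : ℕ → ℕ} {x y : Finset ℕ} (hx : x ∈ facets q β)
    (hy : y ∈ facets q β) (h : y ⊆ x) : y = x := by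
  obtain ⟨p, -, j, -, rfl⟩ := mem_facets.1 hx
  obtain ⟨p', -, j', -, rfl⟩ := mem_facets.1 hy
  obtain ⟨z, hz⟩ := simp0_nonempty p' j'
  obtain ⟨rfl, rfl⟩ := simp0_inj z hz (h hz)
  rfl

lemma facets_filter (q : ℕ) (β : ℕ → ℕ) (p : ℕ) :
    ((facets q β).filter fun x => x.card = p + 1).card = if p ≤ q then β p else 0 := by
  split_ifs with h
  · have : ((facets q β).filter fun x => x.card = p + 1)
        = (Finset.range (β p)).image (simp0 p) := by
      ext x
      simp only [Finset.mem_filter, mem_facets, Finset.mem_image, Finset.mem_range]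
      constructor
      · rintro ⟨⟨p', -, j, hj, rfl⟩, hc⟩
        rw [simp0_card] at hc
        obtain rfl : p' = p := by omega
        exact ⟨j, hj, rfl⟩
      · rintro ⟨j, hj, rfl⟩
        exact ⟨⟨p, h, j, hj, rfl⟩, simp0_card p j⟩
    rw [this, Finset.card_image_of_injective, Finset.card_range]
    intro a b hab
    obtain ⟨z, hz⟩ := simp0_nonempty p a
    exact (simp0_inj z hz (hab ▸ hz)).2
  · rw [Finset.card_eq_zero, Finset.filter_eq_empty_iff]
    intro x hx hc
    obtain ⟨p', hp', j, -, rfl⟩ := mem_facets.1 hx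
    rw [simp0_card] at hc
    omega

lemma betti_facets (q : ℕ) (β : ℕ → ℕ) (p : ℕ) :
    betti (facets q β) p = if p ≤ q then β p else 0 := by
  have h0 : extDer (facets q β) = 0 := by
    ext x y
    simp only [extDer, Matrix.of_apply, Matrix.zero_apply]
    rw [if_neg]
    rintro ⟨h1, h2⟩
    rw [facets_anti x.2 y.2 h1] at h2
    omega
  have h1 : hodgeBlock (facets q β) p = 0 := by
    simp [hodgeBlock, hodge, dirac, h0]
  rw [betti, h1, map_zero, LinearMap.ker_zero, finrank_top, Module.finrank_fintype_fun_eq_card,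
    Fintype.card_coe, facets_filter]

/-- **Realization of Betti vectors by open sets.** For every finite sequence
(β 0, β 1, …, β q) of nonnegative integers there are a finite abstract simplicial
complex G and a subcomplex K ⊆ G whose open complement U = G \ K has b_p(U) = β p
for p ≤ q and b_p(U) = 0 for p > q. -/
theorem betti_realization (q : ℕ) (β : ℕ → ℕ) :
    ∃ G K : Finset (Finset ℕ), IsComplex G ∧ K ⊆ G ∧ IsSubcomplex K ∧
      (∀ p ≤ q, betti (G \ K) p = β p) ∧ (∀ p > q, betti (G \ K) p = 0) := by
  let G : Finset (Finset ℕ) :=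
    insert {0} ((facets q β).biUnion fun x => x.powerset.filter fun y => y.Nonempty)
  have hG : ∀ y, y ∈ G ↔ y = {0} ∨ ∃ x ∈ facets q β, y ⊆ x ∧ y.Nonempty := by
    intro y; simp [G]
  have hF : facets q β ⊆ G := by
    intro x hx
    refine (hG x).2 (Or.inr ⟨x, hx, subset_rfl, ?_⟩)
    obtain ⟨p, -, j, -, rfl⟩ := mem_facets.1 hx
    exact simp0_nonempty p j
  have hcl : ∀ x ∈ G, ∀ y : Finset ℕ, y ⊆ x → y.Nonempty → y ∈ G := by
    intro x hx y hy hne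
    rcases (hG x).1 hx with rfl | ⟨z, hz, hxz, -⟩
    · rcases Finset.subset_singleton_iff.1 hy with rfl | rfl
      · simp at hne
      · exact hx
    · exact (hG y).2 (Or.inr ⟨z, hz, hy.trans hxz, hne⟩)
  have hU : G \ (G \ facets q β) = facets q β := by
    rw [Finset.sdiff_sdiff_eq_self hF]
  refine ⟨G, G \ facets q β, ⟨⟨{0}, (hG _).2 (Or.inl rfl)⟩, ?_, hcl⟩, Finset.sdiff_subset, ?_, ?_, ?_⟩
  · intro h
    rcases (hG _).1 h with h | ⟨z, -, -, h⟩
    · exact absurd h.symm (Finset.singleton_ne_empty 0)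
    · simp at h
  · intro x hx y hy hne
    rw [Finset.mem_sdiff] at hx ⊢
    refine ⟨hcl x hx.1 y hy hne, fun hyF => hx.2 ?_⟩
    rcases (hG x).1 hx.1 with rfl | ⟨z, hz, hxz, -⟩
    · rcases Finset.subset_singleton_iff.1 hy with rfl | rfl
      · simp at hne
      · exact hyF
    · have : y = z := facets_anti hz hyF (hy.trans hxz)
      subst this
      rwa [Finset.Subset.antisymm hxz hy]
  · intro p hp
    rw [hU, betti_facets, if_pos hp]
  · intro p hp
    rw [hU, betti_facets, if_neg (by omega)]
end

section
/- Dichotomy when adding a simplex: Let G be a finite abstract simplicial complex, x ∈ G a facet (an element not strictly contained in any other element of G) with |x| = k+1, and K = G \ {x}, which is a subcomplex. Then exactly one of the following holds: (i) b_k(G) = b_k(K) + 1 and b_p(G) = b_p(K) for all p ≠ k, or (ii) k ≥ 1, b_{k−1}(G) = b_{k−1}(K) − 1 and b_p(G) = b_p(K) for all p ≠ k−1. -/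
open Matrix

/-- coboundary entry -/
noncomputable def ent (y z : Finset ℕ) : ℝ :=
  if z ⊆ y ∧ y.card = z.card + 1 then incSign y z else 0

/-- n-element members -/
abbrev lay (A : Finset (Finset ℕ)) (n : ℕ) : Finset (Finset ℕ) := A.filter fun x => x.card = n

/-- rectangular coboundary -/
noncomputable def cob (A : Finset (Finset ℕ)) (n : ℕ) : Matrix (lay A (n+1)) (lay A n) ℝ :=
  Matrix.of fun y z => ent y z

lemma incSign_erase (y : Finset ℕ) (a : ℕ) (ha : a ∈ y) :
    incSign y (y.erase a) = (-1 : ℝ) ^ (y.filter (· < a)).card := by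
  unfold incSign
  congr 2
  ext v
  simp only [Finset.mem_filter, Finset.mem_sdiff, Finset.mem_erase]
  grind

lemma ent_erase (y : Finset ℕ) (a : ℕ) (ha : a ∈ y) :
    ent y (y.erase a) = (-1 : ℝ) ^ (y.filter (· < a)).card := by
  unfold ent
  rw [if_pos, incSign_erase y a ha]
  exact ⟨Finset.erase_subset _ _, (Finset.card_erase_add_one ha).symm⟩

lemma ent_sq_aux (y : Finset ℕ) (a b : ℕ) (ha : a ∈ y) (hb : b ∈ y) (hab : a < b) :
    ent y (y.erase a) * ent (y.erase a) ((y.erase a).erase b) +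
      ent y (y.erase b) * ent (y.erase b) ((y.erase a).erase b) = 0 := by
  have h1 : b ∈ y.erase a := Finset.mem_erase.2 ⟨hab.ne', hb⟩
  have h2 : a ∈ y.erase b := Finset.mem_erase.2 ⟨hab.ne, ha⟩
  rw [ent_erase _ _ ha, ent_erase _ _ hb, ent_erase _ _ h1, Finset.erase_right_comm,
    ent_erase _ _ h2]
  have e1 : (y.erase b).filter (· < a) = y.filter (· < a) := by
    ext v; simp only [Finset.mem_filter, Finset.mem_erase]; grind
  have e2 : (y.filter (· < b)).card = ((y.erase a).filter (· < b)).card + 1 := by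
    rw [Finset.filter_erase, Finset.card_erase_add_one]
    simp [ha, hab]
  rw [e1, e2, pow_succ]
  ring

lemma ent_sq_sum (A : Finset (Finset ℕ)) (hA : IsSubcomplex A) (n : ℕ) (y w : Finset ℕ)
    (hy : y ∈ A) (hyc : y.card = n + 2) (hwc : w.card = n) (hn : 1 ≤ n) :
    ∑ z ∈ lay A (n+1), ent y z * ent z w = 0 := by
  by_cases hwy : w ⊆ y
  · have hc : (y \ w).card = 2 := by
      rw [Finset.card_sdiff_of_subset hwy]; omega
    have : ∃ a b, a < b ∧ y \ w = {a, b} := by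
      obtain ⟨a, b, hab, h⟩ := Finset.card_eq_two.1 hc
      rcases lt_or_gt_of_ne hab with h' | h'
      · exact ⟨a, b, h', h⟩
      · exact ⟨b, a, h', by rw [h, Finset.pair_comm]⟩
    obtain ⟨a, b, hab, h⟩ := this
    have hmem : ∀ v, (v ∈ y ∧ v ∉ w) ↔ (v = a ∨ v = b) := by
      intro v; have := congrArg (v ∈ ·) h; simpa using this
    have ha : a ∈ y := ((hmem a).2 (Or.inl rfl)).1
    have hb : b ∈ y := ((hmem b).2 (Or.inr rfl)).1
    have hw : w = (y.erase a).erase b := by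
      ext v; have := hmem v; have := @hwy v; simp only [Finset.mem_erase]; tauto
    have hz : ∀ c ∈ y, y.erase c ∈ lay A (n+1) := by
      intro c hc
      have hcc := Finset.card_erase_add_one hc
      refine Finset.mem_filter.2 ⟨hA y hy _ (Finset.erase_subset _ _) ?_, by omega⟩
      rw [← Finset.card_pos]; omega
    have hne : y.erase a ≠ y.erase b := by
      intro h; have : b ∈ y.erase a := Finset.mem_erase.2 ⟨hab.ne', hb⟩
      rw [h] at this; simp at this
    have hsub : ({y.erase a, y.erase b} : Finset (Finset ℕ)) ⊆ lay A (n+1) := by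
      intro z hz'
      rcases Finset.mem_insert.1 hz' with rfl | hz'
      · exact hz a ha
      · rw [Finset.mem_singleton.1 hz']; exact hz b hb
    rw [← Finset.sum_subset hsub, Finset.sum_pair hne, hw]
    · exact ent_sq_aux y a b ha hb hab
    · intro z hzl hzn
      by_contra hcon
      apply hzn
      have h1 : z ⊆ y := by
        by_contra h'; apply hcon; simp [ent, h']
      have h2 : w ⊆ z := by
        by_contra h'; apply hcon; simp [ent, h']
      have h3 : z.card = n + 1 := (Finset.mem_filter.1 hzl).2
      have key : ∀ c, c ∈ y → c ∉ z → z = y.erase c := by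
        intro c hc hcz
        apply Finset.eq_of_subset_of_card_le
        · intro v hv; exact Finset.mem_erase.2 ⟨fun e => hcz (e ▸ hv), h1 hv⟩
        · have := Finset.card_erase_add_one hc; omega
      by_cases haz : a ∈ z
      · have hbz : b ∉ z := by
          intro hbz
          have : y ⊆ z := by
            intro v hv
            by_cases hvw : v ∈ w
            · exact h2 hvw
            · rcases (hmem v).1 ⟨hv, hvw⟩ with rfl | rfl <;> assumption
          have := Finset.card_le_card this
          omega
        simp [key b hb hbz]
      · simp [key a ha haz]
  · apply Finset.sum_eq_zero
    intro z _
    by_cases h1 : z ⊆ y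
    · have : ¬ w ⊆ z := fun h => hwy (h.trans h1)
      simp [ent, this]
    · simp [ent, h1]

lemma cob_sq (A : Finset (Finset ℕ)) (hA : IsSubcomplex A) (h0 : ∅ ∉ A) (n : ℕ) :
    cob A (n+1) * cob A n = 0 := by
  ext y w
  obtain ⟨y, hy⟩ := y
  obtain ⟨w, hw⟩ := w
  have hy' := Finset.mem_filter.1 hy
  have hw' := Finset.mem_filter.1 hw
  have hn : 1 ≤ n := by
    rcases Nat.eq_zero_or_pos n with h | h
    · exfalso; apply h0
      have : w = ∅ := Finset.card_eq_zero.1 (hw'.2.trans h)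
      rw [← this]; exact hw'.1
    · exact h
  rw [Matrix.mul_apply]
  have := ent_sq_sum A hA n y w hy'.1 hy'.2 hw'.2 hn
  rw [← Finset.sum_coe_sort] at this
  simpa [cob] using this

lemma block_rank {l m n : Type*} [Fintype l] [Fintype m] [Fintype n] [DecidableEq m]
    [DecidableEq l] [DecidableEq n]
    (B : Matrix l m ℝ) (C : Matrix m n ℝ) (h : B * C = 0) :
    Module.finrank ℝ (LinearMap.ker (Matrix.toLin' (Bᵀ * B + C * Cᵀ))) + B.rank + C.rank
      = Fintype.card m := by
  have h1 : Bᵀ * B + C * Cᵀ = (fromCols Bᵀ C) * (fromCols Bᵀ C)ᵀ := by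
    rw [transpose_fromCols, fromCols_mul_fromRows, transpose_transpose]
  have h2 : (Bᵀ * B + C * Cᵀ).rank = B.rank + C.rank := by
    rw [h1, rank_self_mul_transpose, ← rank_transpose B]
    unfold Matrix.rank
    have hs : LinearMap.range (fromCols Bᵀ C).mulVecLin =
        LinearMap.range (Bᵀ).mulVecLin ⊔ LinearMap.range C.mulVecLin := by
      ext v
      simp only [LinearMap.mem_range, Submodule.mem_sup, mulVecLin_apply]
      constructor
      · rintro ⟨u, rfl⟩
        exact ⟨_, ⟨u ∘ Sum.inl, rfl⟩, _, ⟨u ∘ Sum.inr, rfl⟩, (fromCols_mulVec _ _ _).symm⟩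
      · rintro ⟨_, ⟨a, rfl⟩, _, ⟨b, rfl⟩, rfl⟩
        exact ⟨Sum.elim a b, by rw [fromCols_mulVec]; rfl⟩
    have hd : LinearMap.range (Bᵀ).mulVecLin ⊓ LinearMap.range C.mulVecLin = ⊥ := by
      rw [eq_bot_iff]
      rintro v ⟨⟨a, ha⟩, ⟨b, hb⟩⟩
      rw [mulVecLin_apply] at ha hb
      have : v ⬝ᵥ v = 0 := by
        nth_rewrite 1 [← ha]
        rw [← hb, mulVec_transpose, ← dotProduct_mulVec, mulVec_mulVec, h]
        simp
      simpa using dotProduct_self_eq_zero.1 this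
    have := Submodule.finrank_sup_add_finrank_inf_eq
      (LinearMap.range (Bᵀ).mulVecLin) (LinearMap.range C.mulVecLin)
    rw [hd, finrank_bot] at this
    rw [hs]; omega
  have h3 := (Matrix.toLin' (Bᵀ * B + C * Cᵀ)).finrank_range_add_finrank_ker
  have h4 : Module.finrank ℝ (LinearMap.range (Matrix.toLin' (Bᵀ * B + C * Cᵀ)))
    = B.rank + C.rank := h2
  rw [h4] at h3
  simp at h3
  omega

lemma hodgeBlock_eq (A : Finset (Finset ℕ)) (p : ℕ) :
    hodgeBlock A p = (cob A (p+1))ᵀ * cob A (p+1) + cob A p * (cob A p)ᵀ := by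
  have hd : ∀ y z : A, extDer A y z = ent y z := fun _ _ => rfl
  have h0 : ∀ y z : Finset ℕ, y.card ≠ z.card + 1 → ent y z = 0 := by
    intro y z h; simp [ent, h]
  ext ⟨y, hy⟩ ⟨w, hw⟩
  have hy' := (Finset.mem_filter.1 hy).2
  have hw' := (Finset.mem_filter.1 hw).2
  have e1 : ((cob A (p+1))ᵀ * cob A (p+1)) ⟨y, hy⟩ ⟨w, hw⟩ = ∑ z ∈ A, ent z y * ent z w := by
    rw [Matrix.mul_apply]
    have : ∑ z ∈ lay A (p+1+1), ent z y * ent z w = ∑ z ∈ A, ent z y * ent z w := by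
      rw [lay, Finset.sum_filter]
      refine Finset.sum_congr rfl fun z _ => ?_
      split_ifs with h
      · rfl
      · rw [h0 z y (by omega), zero_mul]
    rw [← this]
    exact Finset.sum_coe_sort (lay A (p+1+1)) (fun z => ent z y * ent z w)
  have e2 : (cob A p * (cob A p)ᵀ) ⟨y, hy⟩ ⟨w, hw⟩ = ∑ z ∈ A, ent y z * ent w z := by
    rw [Matrix.mul_apply]
    have : ∑ z ∈ lay A p, ent y z * ent w z = ∑ z ∈ A, ent y z * ent w z := by
      rw [lay, Finset.sum_filter]
      refine Finset.sum_congr rfl fun z _ => ?_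
      split_ifs with h
      · rfl
      · rw [h0 y z (by omega), zero_mul]
    rw [← this]
    exact Finset.sum_coe_sort (lay A p) (fun z => ent y z * ent w z)
  rw [Matrix.add_apply, e1, e2]
  rw [← Finset.sum_add_distrib, ← Finset.sum_coe_sort]
  simp only [hodgeBlock, hodge, dirac, Matrix.submatrix_apply, Matrix.mul_apply, Matrix.add_apply,
    Matrix.transpose_apply, hd]
  refine Finset.sum_congr rfl fun z _ => ?_
  by_cases hz : (z : Finset ℕ).card = p + 1 + 1
  · rw [h0 y z (by omega), h0 w z (by omega)]; ring
  · rw [h0 z y (by omega), h0 z w (by omega)]; ring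

/-- row vector on the ambient complex -/
noncomputable def rowv (U : Finset (Finset ℕ)) (y : Finset ℕ) : U → ℝ := fun z => ent y z

/-- row span -/
noncomputable def rspan (U A : Finset (Finset ℕ)) (n : ℕ) : Submodule ℝ (U → ℝ) :=
  Submodule.span ℝ (rowv U '' (lay A (n+1) : Set (Finset ℕ)))

lemma cob_rank (U A : Finset (Finset ℕ)) (hAU : A ⊆ U) (hU : ∅ ∉ U) (hA : IsSubcomplex A) (n : ℕ) :
    (cob A n).rank = Module.finrank ℝ (rspan U A n) := by
  let ι : lay A n → U := fun z => ⟨z.1, hAU (Finset.mem_filter.1 z.2).1⟩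
  have hι : Function.Injective ι := by
    intro a b h; exact Subtype.ext (congrArg (fun t : U => t.1) h)
  let f := Function.ExtendByZero.linearMap ℝ ι
  have hf : Function.Injective f := by
    intro a b h
    funext i
    have := congrFun h (ι i)
    simpa [f, hι.extend_apply] using this
  have hrow : ∀ y : lay A (n+1), f ((cob A n) y) = rowv U y := by
    rintro ⟨y, hy⟩
    have hy' := Finset.mem_filter.1 hy
    funext ⟨z, hz⟩
    by_cases h : ∃ i, ι i = ⟨z, hz⟩
    · obtain ⟨i, hi⟩ := h
      rw [← hi]
      simp only [f, Function.ExtendByZero.linearMap_apply, hι.extend_apply]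
      rfl
    · simp only [f, Function.ExtendByZero.linearMap_apply]
      rw [Function.extend_apply' _ _ _ h]
      symm
      show ent y z = 0
      unfold ent
      rw [if_neg]
      rintro ⟨h1, h2⟩
      apply h
      have hzA : z ∈ A := by
        refine hA y hy'.1 z h1 ?_
        rw [Finset.nonempty_iff_ne_empty]; rintro rfl; exact hU hz
      exact ⟨⟨z, Finset.mem_filter.2 ⟨hzA, by have := hy'.2; omega⟩⟩, rfl⟩
  rw [Matrix.rank_eq_finrank_span_row, 
    (Submodule.equivMapOfInjective f hf _).finrank_eq, Submodule.map_span, rspan]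
  have : f '' Set.range (cob A n).row = rowv U '' (lay A (n+1) : Set (Finset ℕ)) := by
    ext v
    constructor
    · rintro ⟨_, ⟨y, rfl⟩, rfl⟩
      exact ⟨y, y.2, (hrow y).symm⟩
    · rintro ⟨y, hy, rfl⟩
      exact ⟨_, ⟨⟨y, hy⟩, rfl⟩, hrow ⟨y, hy⟩⟩
  rw [this]

lemma betti_formula (U A : Finset (Finset ℕ)) (hAU : A ⊆ U) (hU : ∅ ∉ U) (hA : IsSubcomplex A)
    (p : ℕ) :
    betti A p + Module.finrank ℝ (rspan U A (p+1)) + Module.finrank ℝ (rspan U A p)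
      = (lay A (p+1)).card := by
  rw [← cob_rank U A hAU hU hA, ← cob_rank U A hAU hU hA, betti, hodgeBlock_eq]
  have := block_rank (cob A (p+1)) (cob A p) (cob_sq A hA (fun h => hU (hAU h)) p)
  rw [Fintype.card_coe] at this
  exact this

lemma lay_erase_ne (G : Finset (Finset ℕ)) (x : Finset ℕ) (n : ℕ) (h : x.card ≠ n) :
    lay (G.erase x) n = lay G n := by
  ext v; simp only [lay, Finset.mem_filter, Finset.mem_erase]
  constructor
  · rintro ⟨⟨_, h1⟩, h2⟩; exact ⟨h1, h2⟩
  · rintro ⟨h1, h2⟩; exact ⟨⟨fun e => h (e ▸ h2), h1⟩, h2⟩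

lemma lay_erase_eq (G : Finset (Finset ℕ)) (x : Finset ℕ) (hx : x ∈ G) (n : ℕ) (h : x.card = n) :
    lay G n = insert x (lay (G.erase x) n) := by
  ext v; simp only [lay, Finset.mem_filter, Finset.mem_erase, Finset.mem_insert]
  constructor
  · rintro ⟨h1, h2⟩
    by_cases e : v = x
    · exact Or.inl e
    · exact Or.inr ⟨⟨e, h1⟩, h2⟩
  · rintro (rfl | ⟨⟨_, h1⟩, h2⟩)
    · exact ⟨hx, h⟩
    · exact ⟨h1, h2⟩

/-- **Dichotomy when removing a facet.** If x ∈ G is a facet with |x| = k+1 and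
K = G \ {x}, then K is a subcomplex and exactly one of the following holds:
(i) b_k(G) = b_k(K) + 1 and b_p(G) = b_p(K) for all p ≠ k, or
(ii) k ≥ 1, b_{k-1}(G) = b_{k-1}(K) - 1 and b_p(G) = b_p(K) for all p ≠ k-1. -/
theorem betti_facet_dichotomy (G : Finset (Finset ℕ)) (hG : IsComplex G)
    (x : Finset ℕ) (hx : x ∈ G) (k : ℕ) (hcard : x.card = k + 1)
    (hfacet : ∀ y ∈ G, x ⊆ y → y = x) :
    IsSubcomplex (G.erase x) ∧
      Xor' (betti G k = betti (G.erase x) k + 1 ∧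
              ∀ p, p ≠ k → betti G p = betti (G.erase x) p)
           (1 ≤ k ∧ betti (G.erase x) (k - 1) = betti G (k - 1) + 1 ∧
              ∀ p, p ≠ k - 1 → betti G p = betti (G.erase x) p) := by
  have hK : IsSubcomplex (G.erase x) := by
    intro y hy z hz hzn
    have hy' := Finset.mem_erase.1 hy
    refine Finset.mem_erase.2 ⟨?_, hG.2.2 y hy'.2 z hz hzn⟩
    rintro rfl
    exact hy'.1 (hfacet y hy'.2 hz)
  refine ⟨hK, ?_⟩
  have hGs : IsSubcomplex G := hG.2.2
  have h0 := hG.2.1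
  have fG := betti_formula G G (Finset.Subset.refl _) h0 hGs
  have fK := betti_formula G (G.erase x) (Finset.erase_subset _ _) h0 hK
  have hrne : ∀ n, n ≠ k → rspan G (G.erase x) n = rspan G G n := by
    intro n hn
    rw [rspan, rspan, lay_erase_ne G x (n+1) (by omega)]
  have hcne : ∀ p, p ≠ k → (lay (G.erase x) (p+1)).card = (lay G (p+1)).card := by
    intro n hn
    rw [lay_erase_ne G x (n+1) (by omega)]
  have hins := lay_erase_eq G x hx (k+1) hcard
  have hceq : (lay G (k+1)).card = (lay (G.erase x) (k+1)).card + 1 := by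
    rw [hins, Finset.card_insert_of_notMem]
    simp [lay]
  have hreq : rspan G G k = rspan G (G.erase x) k ⊔ Submodule.span ℝ {rowv G x} := by
    rw [rspan, rspan, hins, Finset.coe_insert, Set.image_insert_eq, Submodule.span_insert, sup_comm]
  have fGk := fG k
  have fKk := fK k
  rw [hrne (k+1) (by omega)] at fKk
  by_cases hmem : rowv G x ∈ rspan G (G.erase x) k
  · have hr : rspan G (G.erase x) k = rspan G G k := by
      rw [hreq]; symm
      rw [sup_eq_left, Submodule.span_singleton_le_iff_mem]; exact hmem
    rw [hr] at fKk
    refine Or.inl ⟨⟨by omega, ?_⟩, ?_⟩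
    · intro p hp
      have a := fG p
      have b := fK p
      have hr' : ∀ n, rspan G (G.erase x) n = rspan G G n := fun n => by
        by_cases h : n = k
        · rw [h, hr]
        · exact hrne n h
      rw [hr', hr', hcne p hp] at b
      omega
    · rintro ⟨h1, -, h3⟩
      have := h3 k (by omega)
      omega
  · have hr : Module.finrank ℝ (rspan G G k) = Module.finrank ℝ (rspan G (G.erase x) k) + 1 := by
      rw [hreq, Submodule.finrank_sup_span_singleton hmem]
    have hk : 1 ≤ k := by
      by_contra hk
      apply hmem
      have : rowv G x = 0 := by
        funext ⟨z, hz⟩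
        show ent x z = 0
        unfold ent
        rw [if_neg]
        rintro ⟨-, h2⟩
        have : z = ∅ := Finset.card_eq_zero.1 (by omega)
        exact h0 (this ▸ hz)
      rw [this]; exact Submodule.zero_mem _
    refine Or.inr ⟨⟨hk, ?_, ?_⟩, ?_⟩
    · obtain ⟨j, rfl⟩ : ∃ j, k = j + 1 := ⟨k - 1, by omega⟩
      have a := fG j
      have b := fK j
      rw [hrne j (by omega), hcne j (by omega)] at b
      simp only [Nat.add_sub_cancel]
      omega
    · intro p hp
      by_cases h : p = k
      · subst h; omega
      · have a := fG p
        have b := fK p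
        rw [hrne p h, hrne (p+1) (by omega), hcne p h] at b
        omega
    · rintro ⟨h1, -⟩
      omega
end

section
/- Suspension formula: Let H be a finite abstract simplicial complex with vertex set V ⊆ ℕ and let a, b be two natural numbers not in V. Define the suspension S(H) = H ∪ {{a},{b}} ∪ {x ∪ {a} : x ∈ H} ∪ {x ∪ {b} : x ∈ H}, which is a finite abstract simplicial complex. Then b_0(S(H)) = 1, b_1(S(H)) = b_0(H) − 1, and b_k(S(H)) = b_{k−1}(H) for all k ≥ 2. -/
open Matrix

/-- The suspension of H with two new vertices a and b:
S(H) = H ∪ {{a},{b}} ∪ {x ∪ {a} : x ∈ H} ∪ {x ∪ {b} : x ∈ H}. -/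
def susp (H : Finset (Finset ℕ)) (a b : ℕ) : Finset (Finset ℕ) :=
  H ∪ {{a}, {b}} ∪ H.image (insert a) ∪ H.image (insert b)


namespace SuspAux

theorem rank_add_ker {m n : Type*} [Fintype m] [Fintype n] [DecidableEq n] (A : Matrix m n ℝ) :
    A.rank + Module.finrank ℝ (LinearMap.ker A.mulVecLin) = Fintype.card n := by
  have := A.mulVecLin.finrank_range_add_finrank_ker
  rw [Module.finrank_fintype_fun_eq_card] at this
  exact this

theorem rank_blk {m n m' n' : Type*} [Fintype m] [Fintype n] [Fintype m'] [Fintype n']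
    [DecidableEq n] [DecidableEq n']
    (A : Matrix m n ℝ) (D : Matrix m' n' ℝ) :
    (fromBlocks A 0 0 D).rank = A.rank + D.rank := by
  have e : LinearMap.ker (fromBlocks A 0 0 D).mulVecLin ≃ₗ[ℝ]
      (LinearMap.ker A.mulVecLin × LinearMap.ker D.mulVecLin) :=
    { toFun := fun v => (⟨v.1 ∘ Sum.inl, by
        have h := v.2
        simp only [LinearMap.mem_ker, mulVecLin_apply, fromBlocks_mulVec] at h ⊢
        ext i
        have := congrFun h (Sum.inl i)
        simpa using this⟩, ⟨v.1 ∘ Sum.inr, by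
        have h := v.2
        simp only [LinearMap.mem_ker, mulVecLin_apply, fromBlocks_mulVec] at h ⊢
        ext i
        have := congrFun h (Sum.inr i)
        simpa using this⟩)
      invFun := fun w => ⟨Sum.elim w.1.1 w.2.1, by
        have h1 := w.1.2
        have h2 := w.2.2
        simp only [LinearMap.mem_ker, mulVecLin_apply] at h1 h2 ⊢
        rw [fromBlocks_mulVec]
        simp [h1, h2]
⟩
      map_add' := fun _ _ => rfl
      map_smul' := fun _ _ => rfl
      left_inv := fun v => by
        ext i; cases i <;> rfl
      right_inv := fun v => rfl }
  have h1 := rank_add_ker (fromBlocks A 0 0 D)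
  have h2 := rank_add_ker A
  have h3 := rank_add_ker D
  rw [e.finrank_eq, Module.finrank_prod, Fintype.card_sum] at h1
  omega

theorem rank_hodge {l m n : Type} [Fintype l] [Fintype m] [Fintype n] [DecidableEq l]
    [DecidableEq m] [DecidableEq n] (B : Matrix m l ℝ) (C : Matrix n m ℝ) (h : C * B = 0) :
    (B * Bᵀ + Cᵀ * C).rank = B.rank + C.rank := by
  have h' : Bᵀ * Cᵀ = 0 := by rw [← transpose_mul, h, transpose_zero]
  have e1 : B * Bᵀ + Cᵀ * C = fromCols B Cᵀ * (fromCols B Cᵀ)ᵀ := by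
    rw [transpose_fromCols, fromCols_mul_fromRows, transpose_transpose]
  rw [e1, rank_self_mul_transpose, ← rank_transpose_mul_self, transpose_fromCols,
    fromRows_mul_fromCols, transpose_transpose, h, h', rank_blk, rank_transpose_mul_self,
    rank_self_mul_transpose]

theorem rank_three {l m n : Type} [Fintype l] [Fintype m] [Fintype n] [DecidableEq l]
    [DecidableEq m] [DecidableEq n] (d0 : Matrix m l ℝ) (d1 : Matrix n m ℝ) (h : d1 * d0 = 0)
    (sa sb : Matrix m m ℝ) (ta tb : Matrix l l ℝ) (hsa : sa * sa = 1) (hsb : sb * sb = 1)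
    (hta : ta * ta = 1) (htb : tb * tb = 1) :
    (fromBlocks d1 0 (fromRows sa sb)
      (fromBlocks (-(sa * d0 * ta)) 0 0 (-(sb * d0 * tb)))).rank = Fintype.card m + d0.rank := by
  set M := fromBlocks d1 0 (fromRows sa sb)
      (fromBlocks (-(sa * d0 * ta)) 0 0 (-(sb * d0 * tb))) with hM
  let U : Matrix (n ⊕ (m ⊕ m)) (n ⊕ (m ⊕ m)) ℝ :=
    fromBlocks 1 (fromCols (-(d1 * sa)) 0) 0 (fromBlocks sa 0 sa (-sb))
  let V : Matrix (m ⊕ (l ⊕ l)) (m ⊕ (l ⊕ l)) ℝ :=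
    fromBlocks 1 (fromCols d0 0) 0 (fromBlocks ta 0 tb tb)
  let N : Matrix (n ⊕ (m ⊕ m)) (m ⊕ (l ⊕ l)) ℝ :=
    fromBlocks 0 0 (fromRows 1 0) (fromBlocks 0 0 0 d0)
  have un : ∀ {k : Type} [Fintype k] [DecidableEq k] (s : Matrix k k ℝ), s * s = 1 →
      IsUnit s.det := by
    intro k _ _ s hs
    exact (Matrix.isUnit_iff_isUnit_det s).1 (IsUnit.of_mul_eq_one _ hs)
  have hU : IsUnit U.det := by
    simp only [U, det_fromBlocks_zero₂₁, det_fromBlocks_zero₁₂, det_one, one_mul]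
    exact (un sa hsa).mul (un (-sb) (by simpa using hsb))
  have hV : IsUnit V.det := by
    simp only [V, det_fromBlocks_zero₂₁, det_fromBlocks_zero₁₂, det_one, one_mul]
    exact (un ta hta).mul (un tb htb)
  have r1 : ∀ {k : Type} (X : Matrix m k ℝ), sa * (sa * X) = X := by
    intro k X; rw [← Matrix.mul_assoc, hsa, Matrix.one_mul]
  have r2 : ∀ {k : Type} (X : Matrix m k ℝ), sb * (sb * X) = X := by
    intro k X; rw [← Matrix.mul_assoc, hsb, Matrix.one_mul]
  have r3 : ∀ {k : Type} (X : Matrix l k ℝ), d1 * (d0 * X) = 0 := by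
    intro k X; rw [← Matrix.mul_assoc, h, Matrix.zero_mul]
  have key : U * M * V = N := by
    simp only [U, M, V, N, fromBlocks_multiply, fromCols_mul_fromRows, fromCols_mul_fromBlocks,
      fromBlocks_mul_fromRows, Matrix.mul_assoc]
    simp [fromBlocks_multiply, fromCols_mul_fromRows, fromCols_mul_fromBlocks,
      fromBlocks_mul_fromRows, Matrix.mul_assoc, r1, r2, r3, hsa, hsb, hta, htb, h]
    ext (i | i) (j | j) <;> simp
  have hN : N.rank = Fintype.card m + d0.rank := by
    rw [← rank_self_mul_transpose]
    have : N * Nᵀ = fromBlocks 0 0 0 (fromBlocks 1 0 0 (d0 * d0ᵀ)) := by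
      simp only [N, fromBlocks_transpose, fromBlocks_multiply, transpose_fromRows]
      simp [fromRows_mul_fromCols]
      ext (i | i) (j | j) <;> simp
    rw [this, rank_blk, rank_blk, rank_zero, rank_one, rank_self_mul_transpose, zero_add]
  rw [← hN, ← key, rank_mul_eq_left_of_isUnit_det V _ hV, rank_mul_eq_right_of_isUnit_det U _ hU]


/-- entry of the derivative -/
noncomputable def ent (x y : Finset ℕ) : ℝ :=
  if y ⊆ x ∧ x.card = y.card + 1 then incSign x y else 0

noncomputable def Dm (X Y : Finset (Finset ℕ)) : Matrix X Y ℝ :=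
  Matrix.of fun x y => ent x y

noncomputable def sg (v : ℕ) (x : Finset ℕ) : ℝ := (-1) ^ (x.filter (· < v)).card

theorem sg_sq (v : ℕ) (x : Finset ℕ) : sg v x * sg v x = 1 := by
  unfold sg
  rw [← mul_pow]; simp

theorem ent_insert {v : ℕ} {x : Finset ℕ} (h : v ∉ x) : ent (insert v x) x = sg v x := by
  have h1 : insert v x \ x = {v} := by
    ext u; simp only [Finset.mem_sdiff, Finset.mem_insert, Finset.mem_singleton]
    constructor
    · tauto
    · rintro rfl; tauto
  unfold ent
  rw [if_pos ⟨Finset.subset_insert _ _, Finset.card_insert_of_notMem h⟩]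
  unfold incSign sg
  rw [h1]
  congr 2
  ext u
  simp only [Finset.mem_filter, Finset.mem_insert, Finset.mem_singleton, exists_eq_left]
  constructor
  · rintro ⟨rfl | h, h'⟩
    · omega
    · exact ⟨h, h'⟩
  · tauto

theorem ent_cases (x y : Finset ℕ) : ent x y = 0 ∨ ∃ v, v ∉ y ∧ x = insert v y := by
  unfold ent
  split_ifs with h
  · right
    obtain ⟨h1, h2⟩ := h
    have h3 : (x \ y).card = 1 := by
      rw [Finset.card_sdiff_of_subset h1]; omega
    obtain ⟨v, hv⟩ := Finset.card_eq_one.1 h3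
    have hv' : v ∈ x \ y := by simp [hv]
    refine ⟨v, (Finset.mem_sdiff.1 hv').2, ?_⟩
    rw [← Finset.sdiff_union_of_subset h1, hv]; rfl
  · left; rfl

theorem sg_insert {v w : ℕ} {z : Finset ℕ} (hv : v ∉ z) :
    sg w (insert v z) = sg w z * (if v < w then -1 else 1) := by
  unfold sg
  rw [Finset.filter_insert]
  split_ifs with h
  · rw [Finset.card_insert_of_notMem (by simp [hv]), pow_succ]
  · simp

theorem sg_swap {v w : ℕ} {z : Finset ℕ} (hvw : v ≠ w) (hv : v ∉ z) (hw : w ∉ z) :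
    sg w (insert v z) * sg v z = - (sg v (insert w z) * sg w z) := by
  rw [sg_insert hv, sg_insert hw]
  rcases lt_or_gt_of_ne hvw with h | h
  · rw [if_pos h, if_neg (by omega)]; ring
  · rw [if_neg (by omega), if_pos h]; ring

theorem ent_cone {a : ℕ} {x y : Finset ℕ} (hx : a ∉ x) (hy : a ∉ y) :
    ent (insert a x) (insert a y) = - (sg a x * ent x y * sg a y) := by
  by_cases h : ∃ v, v ∉ y ∧ x = insert v y
  · obtain ⟨v, hv, rfl⟩ := h
    have hva : v ≠ a := by rintro rfl; simp at hx
    rw [Finset.insert_comm, ent_insert (by simp [hva, hv]), ent_insert hv]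
    have := sg_swap hva hv hy
    have h2 := sg_sq a y
    have : sg a (insert v y) * sg v y * sg a y = - (sg v (insert a y)) := by
      rw [this]; linear_combination (- sg v (insert a y)) * h2
    rw [this]; ring
  · have h1 : ent x y = 0 := (ent_cases x y).resolve_right h
    rw [h1, mul_zero, zero_mul, neg_zero]
    refine (ent_cases _ _).resolve_right ?_
    rintro ⟨v, hv, e⟩
    apply h
    rw [Finset.mem_insert, not_or] at hv
    refine ⟨v, hv.2, ?_⟩
    have := congrArg (Finset.erase · a) e
    rw [Finset.erase_insert hx, Finset.insert_comm, Finset.erase_insert (by simp [hy, Ne.symm hv.1])] at this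
    exact this

theorem ent_new {a : ℕ} {x y : Finset ℕ} (hx : a ∉ x) (hy : a ∉ y) :
    ent (insert a x) y = if x = y then sg a x else 0 := by
  split_ifs with h
  · subst h; exact ent_insert hx
  · refine (ent_cases _ _).resolve_right ?_
    rintro ⟨v, hv, e⟩
    have : a ∈ insert v y := e ▸ Finset.mem_insert_self a x
    rcases Finset.mem_insert.1 this with rfl | h'
    · have := congrArg (Finset.erase · a) e
      rw [Finset.erase_insert hx, Finset.erase_insert hy] at this
      exact h this
    · exact hy h'

theorem ent_zero {a : ℕ} {x y : Finset ℕ} (hx : a ∉ x) (hy : a ∈ y) : ent x y = 0 := by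
  unfold ent
  rw [if_neg]
  rintro ⟨h, -⟩
  exact hx (h hy)

/-- closed under intermediate sets -/
def Conv (A : Finset (Finset ℕ)) : Prop :=
  ∀ x ∈ A, ∀ z ∈ A, ∀ y, z ⊆ y → y ⊆ x → y ∈ A

theorem Dm_mul {A : Finset (Finset ℕ)} (hA : Conv A) (p : ℕ) :
    Dm (A.filter fun x => x.card = p + 2) (A.filter fun x => x.card = p + 1) *
      Dm (A.filter fun x => x.card = p + 1) (A.filter fun x => x.card = p) = 0 := by
  ext ⟨x, hx⟩ ⟨z, hz⟩
  rw [Finset.mem_filter] at hx hz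
  rw [Matrix.mul_apply]
  simp only [Dm, Matrix.of_apply, Matrix.zero_apply]
  rw [Finset.sum_coe_sort (A.filter fun x => x.card = p + 1) (fun y => ent x y * ent y z)]
  by_cases h : z ⊆ x
  · have h3 : (x \ z).card = 2 := by
      rw [Finset.card_sdiff_of_subset h]; omega
    obtain ⟨v, w, hvw, hv⟩ := Finset.card_eq_two.1 h3
    have hvx : v ∈ x \ z := by simp [hv]
    have hwx : w ∈ x \ z := by simp [hv]
    rw [Finset.mem_sdiff] at hvx hwx
    have ex : x = insert w (insert v z) := by
      rw [← Finset.sdiff_union_of_subset h, hv]; ext u; simp; tauto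
    have hne : insert v z ≠ insert w z := by
      intro e
      have : v ∈ insert w z := e ▸ Finset.mem_insert_self v z
      rw [Finset.mem_insert] at this
      tauto
    rw [← Finset.sum_subset (s₁ := {insert v z, insert w z}), Finset.sum_pair hne]
    · rw [ent_insert hvx.2, ent_insert hwx.2]
      conv_lhs => rw [ex]
      rw [ent_insert (by simp [hwx.2, Ne.symm hvw]), Finset.insert_comm,
        ent_insert (by simp [hvx.2, hvw]), sg_swap hvw hvx.2 hwx.2]
      ring
    · intro y hy
      simp only [Finset.mem_insert, Finset.mem_singleton] at hy
      rw [Finset.mem_filter]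
      rcases hy with rfl | rfl
      · exact ⟨hA x hx.1 z hz.1 _ (Finset.subset_insert _ _)
          (Finset.insert_subset hvx.1 h), by
            rw [Finset.card_insert_of_notMem hvx.2, hz.2]⟩
      · exact ⟨hA x hx.1 z hz.1 _ (Finset.subset_insert _ _)
          (Finset.insert_subset hwx.1 h), by
            rw [Finset.card_insert_of_notMem hwx.2, hz.2]⟩
    · intro y hy hy'
      rcases ent_cases y z with h0 | ⟨u, hu, rfl⟩
      · rw [h0, mul_zero]
      · by_cases hux : u ∈ x
        · have : u ∈ x \ z := by simp [hux, hu]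
          rw [hv] at this
          simp only [Finset.mem_insert, Finset.mem_singleton] at this hy'
          exfalso
          apply hy'
          rcases this with rfl | rfl <;> simp
        · rw [ent_zero hux (Finset.mem_insert_self _ _), zero_mul]
  · apply Finset.sum_eq_zero
    intro y _
    by_cases h1 : y ⊆ x
    · have : ¬ z ⊆ y := fun h2 => h (h2.trans h1)
      have : ent y z = 0 := by unfold ent; rw [if_neg]; tauto
      rw [this, mul_zero]
    · have : ent x y = 0 := by unfold ent; rw [if_neg]; tauto
      rw [this, zero_mul]

theorem ent_card {x y : Finset ℕ} (h : x.card ≠ y.card + 1) : ent x y = 0 := by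
  unfold ent; rw [if_neg]; tauto

theorem hodge_eq (A : Finset (Finset ℕ)) (p : ℕ) :
    hodgeBlock A p =
      Dm (A.filter fun x => x.card = p + 1) (A.filter fun x => x.card = p) *
        (Dm (A.filter fun x => x.card = p + 1) (A.filter fun x => x.card = p))ᵀ +
      (Dm (A.filter fun x => x.card = p + 2) (A.filter fun x => x.card = p + 1))ᵀ *
        Dm (A.filter fun x => x.card = p + 2) (A.filter fun x => x.card = p + 1) := by
  ext ⟨x, hx⟩ ⟨y, hy⟩
  rw [Finset.mem_filter] at hx hy
  simp only [hodgeBlock, hodge, dirac, Matrix.submatrix_apply, Matrix.mul_apply, Matrix.add_apply,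
    Matrix.transpose_apply, Dm, Matrix.of_apply]
  rw [Finset.sum_coe_sort (A.filter fun x => x.card = p) (fun z => ent x z * ent y z),
    Finset.sum_coe_sort (A.filter fun x => x.card = p + 2) (fun z => ent z x * ent z y),
    Finset.sum_filter, Finset.sum_filter, ← Finset.sum_add_distrib]
  have : ∀ z w : A, extDer A z w = ent z w := fun _ _ => rfl
  simp only [this]
  rw [Finset.sum_coe_sort A (fun z => (ent x z + ent z x) * (ent z y + ent y z))]
  apply Finset.sum_congr rfl
  intro z _
  by_cases h1 : z.card = p
  · rw [if_pos h1, if_neg (by omega), ent_card (x := z) (y := x) (by omega),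
      ent_card (x := z) (y := y) (by omega)]
    ring
  · by_cases h2 : z.card = p + 2
    · rw [if_neg h1, if_pos h2, ent_card (x := x) (y := z) (by omega),
        ent_card (x := y) (y := z) (by omega)]
      ring
    · rw [if_neg h1, if_neg h2, ent_card (x := x) (y := z) (by omega),
        ent_card (x := z) (y := x) (by omega)]
      ring

noncomputable def rk (A : Finset (Finset ℕ)) (p : ℕ) : ℕ :=
  (Dm (A.filter fun x => x.card = p + 1) (A.filter fun x => x.card = p)).rank

theorem betti_eq {A : Finset (Finset ℕ)} (hA : Conv A) (p : ℕ) :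
    betti A p + rk A p + rk A (p + 1) = (A.filter fun x => x.card = p + 1).card := by
  have h1 := rank_add_ker (hodgeBlock A p)
  have h2 := rank_hodge _ _ (Dm_mul hA p)
  rw [← hodge_eq] at h2
  rw [h2, Fintype.card_coe] at h1
  have h3 : rk A (p + 1) = (Dm (A.filter fun x => x.card = p + 2)
    (A.filter fun x => x.card = p + 1)).rank := rfl
  have h4 : rk A p = (Dm (A.filter fun x => x.card = p + 1)
    (A.filter fun x => x.card = p)).rank := rfl
  unfold betti
  rw [Matrix.toLin'_apply', h3, h4]
  omega


theorem mem_susp {H : Finset (Finset ℕ)} {a b : ℕ} {x : Finset ℕ} :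
    x ∈ susp H a b ↔ x ∈ H ∨ (∃ y ∈ insert ∅ H, x = insert a y) ∨
      (∃ y ∈ insert ∅ H, x = insert b y) := by
  simp only [susp, Finset.mem_union, Finset.mem_image, Finset.mem_insert, Finset.mem_singleton]
  constructor
  · rintro (((h | h | h) | ⟨y, h, rfl⟩) | ⟨y, h, rfl⟩)
    · exact Or.inl h
    · exact Or.inr (Or.inl ⟨∅, by simp, by simp [h]⟩)
    · exact Or.inr (Or.inr ⟨∅, by simp, by simp [h]⟩)
    · exact Or.inr (Or.inl ⟨y, by simp [h], rfl⟩)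
    · exact Or.inr (Or.inr ⟨y, by simp [h], rfl⟩)
  · rintro (h | ⟨y, rfl | h, rfl⟩ | ⟨y, rfl | h, rfl⟩)
    · tauto
    · simp
    · exact Or.inl (Or.inr ⟨y, h, rfl⟩)
    · simp
    · exact Or.inr ⟨y, h, rfl⟩

theorem conv_of_complex {H : Finset (Finset ℕ)} (hH : IsComplex H) : Conv H := by
  intro x hx z hz y h1 h2
  refine hH.2.2 x hx y h2 ?_
  have : z.Nonempty := by
    rw [Finset.nonempty_iff_ne_empty]; rintro rfl; exact hH.2.1 hz
  exact this.mono h1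

theorem down {H : Finset (Finset ℕ)} (hH : IsComplex H) {x y : Finset ℕ} (hx : x ∈ insert ∅ H)
    (h : y ⊆ x) : y ∈ insert ∅ H := by
  rw [Finset.mem_insert] at hx ⊢
  rcases y.eq_empty_or_nonempty with h0 | h0
  · exact Or.inl h0
  · rcases hx with rfl | hx
    · left; exact Finset.subset_empty.1 h
    · right; exact hH.2.2 x hx y h h0

theorem conv_aug {H : Finset (Finset ℕ)} (hH : IsComplex H) : Conv (insert ∅ H) :=
  fun _ hx _ _ _ _ h2 => down hH hx h2

theorem susp_complex {H : Finset (Finset ℕ)} (hH : IsComplex H) (a b : ℕ) :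
    IsComplex (susp H a b) := by
  have key : ∀ c : ℕ, ∀ z ∈ insert ∅ H, ∀ y : Finset ℕ, y ⊆ insert c z → y.Nonempty →
      y ∈ H ∨ ∃ w ∈ insert ∅ H, y = insert c w := by
    intro c z hz y hy hne
    by_cases hc : c ∈ y
    · right
      exact ⟨y.erase c, down hH hz (Finset.erase_subset_iff_of_mem (Finset.mem_insert_self _ _) |>.2 hy |> fun h => by
        intro u hu
        have h1 := Finset.mem_erase.1 hu
        have := hy h1.2
        rw [Finset.mem_insert] at this
        tauto), (Finset.insert_erase hc).symm⟩
    · left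
      have h1 : y ⊆ z := (Finset.subset_insert_iff_of_notMem hc).1 hy
      have := down hH hz h1
      rw [Finset.mem_insert] at this
      rcases this with rfl | h
      · simp at hne
      · exact h
  refine ⟨⟨{a}, by rw [mem_susp]; right; left; exact ⟨∅, by simp, by simp⟩⟩, ?_, ?_⟩
  · rw [mem_susp]
    rintro (h | ⟨y, _, h⟩ | ⟨y, _, h⟩)
    · exact hH.2.1 h
    · exact (Finset.insert_ne_empty _ _) h.symm
    · exact (Finset.insert_ne_empty _ _) h.symm
  · intro x hx y hy hne
    rw [mem_susp] at hx ⊢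
    rcases hx with h | ⟨z, hz, rfl⟩ | ⟨z, hz, rfl⟩
    · exact Or.inl (hH.2.2 x h y hy hne)
    · rcases key a z hz y hy hne with h | h
      · exact Or.inl h
      · exact Or.inr (Or.inl h)
    · rcases key b z hz y hy hne with h | h
      · exact Or.inl h
      · exact Or.inr (Or.inr h)

theorem not_mem_aug {H : Finset (Finset ℕ)} {a : ℕ} (ha : a ∉ H.sup id) {x : Finset ℕ}
    (hx : x ∈ insert ∅ H) : a ∉ x := by
  rw [Finset.mem_insert] at hx
  rcases hx with rfl | hx
  · simp
  · intro h
    exact ha (Finset.mem_sup.2 ⟨x, hx, h⟩)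

abbrev lev (A : Finset (Finset ℕ)) (p : ℕ) : Finset (Finset ℕ) := A.filter fun x => x.card = p

def emap (a b : ℕ) (X Y : Finset (Finset ℕ)) : X ⊕ (Y ⊕ Y) → Finset ℕ :=
  Sum.elim (fun x => x.1) (Sum.elim (fun y => insert a y.1) (fun y => insert b y.1))

theorem exists_equiv {H : Finset (Finset ℕ)} {a b : ℕ}
    (ha : a ∉ H.sup id) (hb : b ∉ H.sup id) (hab : a ≠ b) (p : ℕ) :
    ∃ e : (lev (insert ∅ H) (p + 1) ⊕ (lev (insert ∅ H) p ⊕ lev (insert ∅ H) p)) ≃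
        lev (susp H a b) (p + 1), ∀ i, (e i).1 = emap a b _ _ i := by
  have hmem : ∀ i, emap a b (lev (insert ∅ H) (p + 1)) (lev (insert ∅ H) p) i ∈
      lev (susp H a b) (p + 1) := by
    rintro (⟨x, hx⟩ | ⟨x, hx⟩ | ⟨x, hx⟩) <;> rw [Finset.mem_filter] at hx ⊢ <;>
      simp only [emap, Sum.elim_inl, Sum.elim_inr, mem_susp]
    · refine ⟨Or.inl ((Finset.mem_insert.1 hx.1).resolve_left ?_), hx.2⟩
      rintro rfl
      simp at hx
    · exact ⟨Or.inr (Or.inl ⟨x, hx.1, rfl⟩), by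
        rw [Finset.card_insert_of_notMem (not_mem_aug ha hx.1), hx.2]⟩
    · exact ⟨Or.inr (Or.inr ⟨x, hx.1, rfl⟩), by
        rw [Finset.card_insert_of_notMem (not_mem_aug hb hx.1), hx.2]⟩
  have era : ∀ {c : ℕ} {x y : Finset ℕ}, c ∉ x → c ∉ y → insert c x = insert c y → x = y := by
    intro c x y h1 h2 h
    rw [← Finset.erase_insert h1, h, Finset.erase_insert h2]
  refine ⟨Equiv.ofBijective (fun i => ⟨_, hmem i⟩) ⟨?_, ?_⟩, fun i => rfl⟩
  · intro i j hij
    rw [Subtype.mk.injEq] at hij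
    have nin : ∀ {c : ℕ} {x y : Finset ℕ}, c ∉ x → x = insert c y → False := by
      rintro c x y h rfl
      exact h (Finset.mem_insert_self _ _)
    rcases i with ⟨x, hx⟩ | ⟨x, hx⟩ | ⟨x, hx⟩ <;> rcases j with ⟨y, hy⟩ | ⟨y, hy⟩ | ⟨y, hy⟩ <;>
      simp only [emap, Sum.elim_inl, Sum.elim_inr] at hij <;>
      have hxa := not_mem_aug ha (Finset.mem_filter.1 hx).1 <;>
      have hxb := not_mem_aug hb (Finset.mem_filter.1 hx).1 <;>
      have hya := not_mem_aug ha (Finset.mem_filter.1 hy).1 <;>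
      have hyb := not_mem_aug hb (Finset.mem_filter.1 hy).1
    · subst hij; rfl
    · exact (nin hxa hij).elim
    · exact (nin hxb hij).elim
    · exact (nin hya hij.symm).elim
    · have := era hxa hya hij; subst this; rfl
    · exact (nin (by simp [hab, hya]) hij.symm).elim
    · exact (nin hyb hij.symm).elim
    · exact (nin (by simp [hab, hxa]) hij).elim
    · have := era hxb hyb hij; subst this; rfl
  · rintro ⟨x, hx⟩
    rw [Finset.mem_filter, mem_susp] at hx
    obtain ⟨h | ⟨y, hy, rfl⟩ | ⟨y, hy, rfl⟩, hc⟩ := hx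
    · exact ⟨Sum.inl ⟨x, Finset.mem_filter.2 ⟨Finset.mem_insert_of_mem h, hc⟩⟩, rfl⟩
    · rw [Finset.card_insert_of_notMem (not_mem_aug ha hy)] at hc
      exact ⟨Sum.inr (Sum.inl ⟨y, Finset.mem_filter.2 ⟨hy, by omega⟩⟩), rfl⟩
    · rw [Finset.card_insert_of_notMem (not_mem_aug hb hy)] at hc
      exact ⟨Sum.inr (Sum.inr ⟨y, Finset.mem_filter.2 ⟨hy, by omega⟩⟩), rfl⟩

theorem card_susp {H : Finset (Finset ℕ)} {a b : ℕ}
    (ha : a ∉ H.sup id) (hb : b ∉ H.sup id) (hab : a ≠ b) (p : ℕ) :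
    (lev (susp H a b) (p + 1)).card =
      (lev (insert ∅ H) (p + 1)).card + 2 * (lev (insert ∅ H) p).card := by
  obtain ⟨e, -⟩ := exists_equiv ha hb hab p
  have := Fintype.card_congr e
  simp only [Fintype.card_sum, Fintype.card_coe] at this
  omega

noncomputable def sgm (a : ℕ) (X : Finset (Finset ℕ)) : Matrix X X ℝ :=
  Matrix.diagonal fun x => sg a x.1

theorem sgm_sq (a : ℕ) (X : Finset (Finset ℕ)) : sgm a X * sgm a X = 1 := by
  simp only [sgm, Matrix.diagonal_mul_diagonal, sg_sq, Matrix.diagonal_one]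

theorem rk_susp {H : Finset (Finset ℕ)} (hH : IsComplex H) {a b : ℕ}
    (ha : a ∉ H.sup id) (hb : b ∉ H.sup id) (hab : a ≠ b) (p : ℕ) :
    rk (susp H a b) (p + 1) = (lev (insert ∅ H) (p + 1)).card + rk (insert ∅ H) p := by
  obtain ⟨e1, he1⟩ := exists_equiv ha hb hab p
  obtain ⟨e2, he2⟩ := exists_equiv ha hb hab (p + 1)
  have h := rank_three _ _ (Dm_mul (conv_aug hH) p) (sgm a _) (sgm b _) (sgm a _) (sgm b _)
    (sgm_sq _ _) (sgm_sq _ _) (sgm_sq _ _) (sgm_sq _ _)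
  rw [Fintype.card_coe] at h
  refine Eq.trans ?_ h
  unfold rk
  rw [← rank_submatrix _ e2 e1]
  congr 1
  ext i j
  rw [Matrix.submatrix_apply]
  simp only [Dm, Matrix.of_apply, he1, he2]
  rcases i with ⟨x, hx⟩ | ⟨x, hx⟩ | ⟨x, hx⟩ <;> rcases j with ⟨y, hy⟩ | ⟨y, hy⟩ | ⟨y, hy⟩ <;>
    simp only [emap, Sum.elim_inl, Sum.elim_inr] <;>
    have hxa := not_mem_aug ha (Finset.mem_filter.1 hx).1 <;>
    have hxb := not_mem_aug hb (Finset.mem_filter.1 hx).1 <;>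
    have hya := not_mem_aug ha (Finset.mem_filter.1 hy).1 <;>
    have hyb := not_mem_aug hb (Finset.mem_filter.1 hy).1
  · simp
  · simp [ent_zero hxa (Finset.mem_insert_self a y)]
  · simp [ent_zero hxb (Finset.mem_insert_self b y)]
  · simp [ent_new hxa hya, sgm, Matrix.diagonal_apply]
  · simp [ent_cone hxa hya, sgm, Matrix.diagonal_mul, Matrix.mul_diagonal]
  · rw [ent_zero (a := b) (by simp [hxb, Ne.symm hab]) (Finset.mem_insert_self b y)]
    simp
  · simp [ent_new hxb hyb, sgm, Matrix.diagonal_apply]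
  · rw [ent_zero (a := a) (by simp [hxa, hab]) (Finset.mem_insert_self a y)]
    simp
  · simp [ent_cone hxb hyb, sgm, Matrix.diagonal_mul, Matrix.mul_diagonal]

theorem lev_zero {H : Finset (Finset ℕ)} : lev (insert ∅ H) 0 = {∅} := by
  ext x
  simp only [Finset.mem_filter, Finset.mem_insert, Finset.card_eq_zero, Finset.mem_singleton]
  tauto

theorem lev_succ {H : Finset (Finset ℕ)} (p : ℕ) : lev (insert ∅ H) (p + 1) = lev H (p + 1) := by
  ext x
  simp only [Finset.mem_filter, Finset.mem_insert]
  constructor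
  · rintro ⟨rfl | h, h'⟩
    · simp at h'
    · exact ⟨h, h'⟩
  · tauto

theorem rk_succ {H : Finset (Finset ℕ)} (p : ℕ) : rk (insert ∅ H) (p + 1) = rk H (p + 1) := by
  have : ∀ A, rk A (p + 1) = (Dm (lev A (p + 1 + 1)) (lev A (p + 1))).rank := fun _ => rfl
  rw [this, this, lev_succ, lev_succ]

theorem rk_zero_complex {H : Finset (Finset ℕ)} (hH : IsComplex H) : rk H 0 = 0 := by
  have h := rank_le_card_width (Dm (lev H (0 + 1)) (lev H 0))
  have h0 : lev H 0 = ∅ := by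
    ext x
    simp only [Finset.mem_filter, Finset.card_eq_zero, Finset.notMem_empty, iff_false]
    rintro ⟨h, rfl⟩
    exact hH.2.1 h
  rw [Fintype.card_coe, h0, Finset.card_empty] at h
  have : rk H 0 = (Dm (lev H (0 + 1)) (lev H 0)).rank := rfl
  rw [this, h0]; omega

theorem rk_zero_aug {H : Finset (Finset ℕ)} (hH : IsComplex H) : rk (insert ∅ H) 0 = 1 := by
  have h := rank_le_card_width (Dm (lev (insert ∅ H) (0 + 1)) (lev (insert ∅ H) 0))
  rw [Fintype.card_coe] at h
  have h1 : (lev (insert ∅ H) 0).card = 1 := by rw [lev_zero]; rfl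
  rw [h1] at h
  have : rk (insert ∅ H) 0 = (Dm (lev (insert ∅ H) (0 + 1)) (lev (insert ∅ H) 0)).rank := rfl
  rw [← this] at h
  refine le_antisymm h (Nat.one_le_iff_ne_zero.2 ?_)
  rw [this]
  intro h0
  have hz : Dm (lev (insert ∅ H) (0 + 1)) (lev (insert ∅ H) 0) = 0 := by
    rw [Matrix.rank, Submodule.finrank_eq_zero, LinearMap.range_eq_bot,
      ← Matrix.toLin'_apply'] at h0
    exact (LinearEquiv.map_eq_zero_iff _).1 h0
  obtain ⟨x, hx⟩ := hH.1
  obtain ⟨v, hv⟩ : x.Nonempty := by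
    rw [Finset.nonempty_iff_ne_empty]; rintro rfl; exact hH.2.1 hx
  have hvH : {v} ∈ H := hH.2.2 x hx {v} (by simpa using hv) (by simp)
  have := congrFun (congrFun hz ⟨{v}, by simp [hvH]⟩) ⟨∅, by simp⟩
  simp only [Dm, Matrix.of_apply, Matrix.zero_apply] at this
  have h3 := ent_insert (v := v) (x := ∅) (by simp)
  simp [sg] at h3
  rw [h3] at this
  exact one_ne_zero this

end SuspAux

open SuspAux

/-- **Suspension formula.** If H is a finite abstract simplicial complex and a, b are two
distinct natural numbers not in the vertex set of H, then S(H) is a finite abstract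
simplicial complex with b_0(S(H)) = 1, b_1(S(H)) = b_0(H) - 1 and
b_k(S(H)) = b_{k-1}(H) for all k ≥ 2. -/
theorem betti_suspension (H : Finset (Finset ℕ)) (hH : IsComplex H) (a b : ℕ)
    (ha : a ∉ H.sup id) (hb : b ∉ H.sup id) (hab : a ≠ b) :
    IsComplex (susp H a b) ∧ betti (susp H a b) 0 = 1 ∧
      betti (susp H a b) 1 = betti H 0 - 1 ∧
      ∀ k, 2 ≤ k → betti (susp H a b) k = betti H (k - 1) := by

  have hS := susp_complex hH a b
  have cS := conv_of_complex hS
  have cH := conv_of_complex hH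
  have e1 := betti_eq cS 0
  have c1 : ∀ p, _ := card_susp ha hb hab
  have r1 : ∀ p, _ := rk_susp hH ha hb hab
  have z1 := rk_zero_complex hS
  have z2 := rk_zero_complex hH
  have z3 := rk_zero_aug hH
  have l0 : (lev (insert ∅ H) 0).card = 1 := by rw [lev_zero]; rfl
  refine ⟨hS, ?_, ?_, ?_⟩
  · have c := c1 0
    have r := r1 0
    unfold lev at *
    simp only [zero_add] at *
    omega
  · have e := betti_eq cS 1
    have e' := betti_eq cH 0
    have r := r1 0
    have r' := r1 1
    have c := c1 1
    have s : rk (insert ∅ H) 1 = rk H 1 := rk_succ 0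
    have l : lev (insert ∅ H) 1 = lev H 1 := lev_succ 0
    unfold lev at *
    simp only [zero_add, Nat.reduceAdd, l] at *
    omega
  · intro k hk
    obtain ⟨j, rfl⟩ : ∃ j, k = j + 2 := ⟨k - 2, by omega⟩
    have e := betti_eq cS (j + 2)
    have e' := betti_eq cH (j + 1)
    have r := r1 (j + 1)
    have r' := r1 (j + 2)
    have c := c1 (j + 2)
    have s : rk (insert ∅ H) (j + 1) = rk H (j + 1) := rk_succ j
    have s' : rk (insert ∅ H) (j + 2) = rk H (j + 2) := rk_succ (j + 1)
    have l : lev (insert ∅ H) (j + 2) = lev H (j + 2) := lev_succ (j + 1)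
    have k1 : j + 2 - 1 = j + 1 := rfl
    rw [k1]
    unfold lev at *
    simp only [add_assoc, Nat.reduceAdd, l] at *
    omega
end

section
/- Fixed point congruence: Let G be a finite abstract simplicial complex, p a prime, and π a permutation of ℕ with π^p = identity that maps G to itself (i.e., for every x ∈ G the image set π(x) belongs to G). Then the Euler characteristic satisfies χ(G) ≡ Σ_{x ∈ G, π(x) = x} (−1)^{|x|−1} (mod p), where χ(G) = Σ_{x ∈ G} (−1)^{|x|−1}. -/
theorem aux_card (H : Finset (Finset ℕ)) (p : ℕ) (hp : p.Prime) (π : Equiv.Perm ℕ)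
    (hπ : π ^ p = 1) (hmaps : ∀ x ∈ H, x.image π ∈ H) :
    H.card ≡ (H.filter (fun x => x.image π = x)).card [MOD p] := by
  have : Fact p.Prime := ⟨hp⟩
  let f : Function.End H := fun x => ⟨x.1.image π, hmaps x.1 x.2⟩
  have hf : ∀ n : ℕ, ∀ x : H, ((f ^ n) x).1 = x.1.image (π ^ n : Equiv.Perm ℕ) := by
    intro n
    induction n with
    | zero => intro x; ext a; simp; exact Iff.rfl
    | succ n ih =>
      intro x
      rw [pow_succ]
      change ((f ^ n) (f x)).1 = _
      rw [ih]
      change (x.1.image π).image _ = _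
      rw [Finset.image_image, pow_succ]
      rfl
  have hfp : f ^ p ^ 1 = 1 := by
    funext x
    apply Subtype.ext
    rw [hf, pow_one, hπ]
    ext a; simp; exact Iff.rfl
  have h := Equiv.Perm.card_fixedPoints_modEq (p := p) (n := 1) hfp
  rw [Fintype.card_coe] at h
  convert h using 1
  rw [← Fintype.card_coe]
  refine Fintype.card_congr ⟨fun x => ⟨⟨x.1, (Finset.mem_filter.1 x.2).1⟩,
    Subtype.ext (Finset.mem_filter.1 x.2).2⟩, fun x => ⟨x.1.1, Finset.mem_filter.2
    ⟨x.1.2, congrArg Subtype.val x.2⟩⟩, fun x => rfl, fun x => rfl⟩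

/-- **Fixed point congruence.** If a permutation π of ℕ of order dividing a prime p maps
the finite abstract simplicial complex G to itself, then the Euler characteristic of G is
congruent mod p to the signed count of fixed simplices:
χ(G) ≡ Σ_{x ∈ G, π(x) = x} (-1)^{|x|-1} (mod p). -/
theorem euler_char_fixed_point_congruence (G : Finset (Finset ℕ)) (hG : IsComplex G)
    (p : ℕ) (hp : p.Prime) (π : Equiv.Perm ℕ) (hπ : π ^ p = 1)
    (hmaps : ∀ x ∈ G, x.image π ∈ G) :
    (∑ x ∈ G, (-1 : ℤ) ^ (x.card - 1)) ≡
      (∑ x ∈ G.filter (fun x => x.image π = x), (-1 : ℤ) ^ (x.card - 1)) [ZMOD (p : ℤ)] := by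
  have key : ∀ F : Finset (Finset ℕ), F ⊆ G → (∑ x ∈ F, (-1 : ℤ) ^ (x.card - 1)) =
      ∑ k ∈ G.image Finset.card,
        ((F.filter (fun x => x.card = k)).card : ℤ) * (-1 : ℤ) ^ (k - 1) := by
    intro F hF
    rw [← Finset.sum_fiberwise_of_maps_to (s := F) (t := G.image Finset.card) (g := Finset.card)
      (fun x hx => Finset.mem_image_of_mem _ (hF hx))]
    refine Finset.sum_congr rfl fun k _ => ?_
    rw [Finset.sum_congr rfl (g := fun _ => (-1 : ℤ) ^ (k - 1))
      (fun x hx => by rw [(Finset.mem_filter.1 hx).2])]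
    rw [Finset.sum_const, nsmul_eq_mul]
  rw [key G subset_rfl, key _ (Finset.filter_subset _ _)]
  refine Int.ModEq.sum fun k _ => Int.ModEq.mul_right _ ?_
  have h := aux_card (G.filter (fun x => x.card = k)) p hp π hπ (by
    intro x hx
    rw [Finset.mem_filter] at hx ⊢
    exact ⟨hmaps x hx.1, by rw [Finset.card_image_of_injective _ π.injective, hx.2]⟩)
  rw [Finset.filter_comm] at h
  exact Int.natCast_modEq_iff.2 h
end

section
/- Removing finitely many vertices: Let G be a connected finite abstract simplicial complex (meaning b_0(G) = 1), let v_1, …, v_m be m distinct vertices of G, let K = {{v_1}, …, {v_m}} be the corresponding zero-dimensional subcomplex, and let U = G \ K. Then b_0(U) = 0, b_1(U) = b_1(G) + m − 1, and b_p(U) = b_p(G) for all p ≥ 2. -/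
open Matrix

noncomputable def dd (x y : Finset ℕ) : ℝ :=
  if y ⊆ x ∧ x.card = y.card + 1 then incSign x y else 0

lemma dd_eq_zero {x y : Finset ℕ} (h : x.card ≠ y.card + 1) : dd x y = 0 := by
  unfold dd; rw [if_neg]; exact fun h' => h h'.2

lemma dd_eq_zero' {x y : Finset ℕ} (h : ¬ y ⊆ x) : dd x y = 0 := by
  unfold dd; rw [if_neg]; exact fun h' => h h'.1

noncomputable def bMat (A F : Finset (Finset ℕ)) : Matrix A F ℝ :=
  Matrix.of fun x y => dd x y + dd y x

noncomputable def dMat (A F : Finset (Finset ℕ)) : Matrix A F ℝ :=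
  Matrix.of fun x y => dd x y

lemma betti_eq (A : Finset (Finset ℕ)) (p : ℕ) (F : Finset (Finset ℕ))
    (hF : F = A.filter fun x => x.card = p + 1) :
    betti A p = Module.finrank ℝ (LinearMap.ker (bMat A F).mulVecLin) := by
  subst hF
  have h : hodgeBlock A p = (bMat A (A.filter fun x => x.card = p + 1))ᵀ *
      (bMat A (A.filter fun x => x.card = p + 1)) := by
    ext x y
    simp only [hodgeBlock, hodge, dirac, bMat, Matrix.mul_apply, Matrix.submatrix_apply,
      Matrix.transpose_apply, Matrix.of_apply, Matrix.add_apply, extDer, dd]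
    refine Finset.sum_congr rfl fun z _ => ?_
    ring
  unfold betti
  rw [Matrix.toLin'_apply', h, Matrix.ker_mulVecLin_transpose_mul_self]

lemma mem_ker_bMat (A F : Finset (Finset ℕ)) (f : F → ℝ) :
    f ∈ LinearMap.ker (bMat A F).mulVecLin ↔
      ∀ x ∈ A, ∑ y : F, (dd x y + dd y x) * f y = 0 := by
  simp [bMat, LinearMap.mem_ker, funext_iff, Matrix.mulVec, dotProduct]

lemma mem_ker_dMat (A F : Finset (Finset ℕ)) (f : F → ℝ) :
    f ∈ LinearMap.ker (dMat A F).mulVecLin ↔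
      ∀ x ∈ A, ∑ y : F, dd x y * f y = 0 := by
  simp [dMat, LinearMap.mem_ker, funext_iff, Matrix.mulVec, dotProduct]

lemma mem_ker_dMatT (A F : Finset (Finset ℕ)) (f : F → ℝ) :
    f ∈ LinearMap.ker (dMat F A)ᵀ.mulVecLin ↔
      ∀ x ∈ A, ∑ y : F, dd y x * f y = 0 := by
  simp [dMat, LinearMap.mem_ker, funext_iff, Matrix.vecMul, dotProduct, mul_comm]

lemma finrank_split {E V : Type*} [Fintype E] [Fintype V] [DecidableEq E] [DecidableEq V]
    (Z : Submodule ℝ (E → ℝ)) (M : Matrix E V ℝ) (h : LinearMap.range M.mulVecLin ≤ Z) :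
    Module.finrank ℝ Z =
      Module.finrank ℝ (Z ⊓ LinearMap.ker Mᵀ.mulVecLin : Submodule ℝ (E → ℝ)) + M.rank := by
  let δ := Mᵀ.mulVecLin.domRestrict Z
  have h1 := LinearMap.finrank_range_add_finrank_ker δ
  have hk : Module.finrank ℝ (LinearMap.ker δ) =
      Module.finrank ℝ (Z ⊓ LinearMap.ker Mᵀ.mulVecLin : Submodule ℝ (E → ℝ)) := by
    have : (LinearMap.ker δ).map Z.subtype = Z ⊓ LinearMap.ker Mᵀ.mulVecLin := by
      ext f
      simp [δ, LinearMap.domRestrict_apply, and_comm]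
    rw [← this]
    exact (LinearEquiv.finrank_eq (Submodule.equivMapOfInjective _ Z.injective_subtype _))
  have hr : Module.finrank ℝ (LinearMap.range δ) = M.rank := by
    apply le_antisymm
    · rw [← Matrix.rank_transpose M]
      apply Submodule.finrank_mono
      rintro _ ⟨x, rfl⟩
      exact ⟨x, rfl⟩
    · rw [← Matrix.rank_transpose_mul_self M]
      apply Submodule.finrank_mono
      rintro _ ⟨x, rfl⟩
      refine ⟨⟨M.mulVecLin x, h ⟨x, rfl⟩⟩, ?_⟩
      simp [δ, LinearMap.domRestrict_apply, Matrix.mulVec_mulVec]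
  omega

lemma dd_edge {a b : ℕ} (hab : a < b) (y : Finset ℕ) :
    dd {a, b} y = (if y = {b} then 1 else 0) - (if y = {a} then 1 else 0) := by
  have hne : a ≠ b := hab.ne
  by_cases hb : y = {b}
  · subst hb
    have e1 : (({a, b} : Finset ℕ).filter
      fun v => ∃ w ∈ ({a, b} : Finset ℕ) \ {b}, v < w) = ∅ := by
      ext v; simp; omega
    have : ¬ b = a := by omega
    simp [dd, incSign, e1, Finset.card_pair hne, this]
  by_cases ha : y = {a}
  · subst ha
    have e1 : (({a, b} : Finset ℕ).filter
      fun v => ∃ w ∈ ({a, b} : Finset ℕ) \ {a}, v < w) = {a} := by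
      ext v; simp; constructor
      · rintro ⟨h, w, h', h''⟩; omega
      · rintro rfl; exact ⟨by simp, b, by omega, by omega⟩
    simp [dd, incSign, e1, Finset.card_pair hne, hne]
  rw [if_neg ha, if_neg hb, dd, if_neg]
  · simp
  rintro ⟨h1, h2⟩
  rw [Finset.card_pair hne] at h2
  obtain ⟨c, rfl⟩ := Finset.card_eq_one.mp (show y.card = 1 by omega)
  simp at h1 ha hb
  tauto

lemma dd_tri {a b c : ℕ} (hab : a < b) (hbc : b < c) (y : Finset ℕ) :
    dd {a, b, c} y = (if y = {b, c} then 1 else 0) - (if y = {a, c} then 1 else 0)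
      + (if y = {a, b} then 1 else 0) := by
  have h3 : ({a, b, c} : Finset ℕ).card = 3 := by
    rw [Finset.card_eq_three]; exact ⟨a, b, c, by omega, by omega, by omega, rfl⟩
  have n1 : ({b, c} : Finset ℕ) ≠ {a, c} := fun h => by
    have : a ∈ ({b, c} : Finset ℕ) := by rw [h]; simp
    simp at this; omega
  have n2 : ({b, c} : Finset ℕ) ≠ {a, b} := fun h => by
    have : a ∈ ({b, c} : Finset ℕ) := by rw [h]; simp
    simp at this; omega
  have n3 : ({a, c} : Finset ℕ) ≠ {a, b} := fun h => by
    have : b ∈ ({a, c} : Finset ℕ) := by rw [h]; simp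
    simp at this; omega
  by_cases h1 : y = {b, c}
  · subst h1
    have e1 : (({a, b, c} : Finset ℕ).filter
      fun v => ∃ w ∈ ({a, b, c} : Finset ℕ) \ {b, c}, v < w) = ∅ := by
      ext v; simp; omega
    have : ({b, c} : Finset ℕ) ⊆ {a, b, c} := by intro; simp; omega
    rw [dd, if_pos ⟨this, by rw [h3, Finset.card_pair (by omega)]⟩, incSign, e1]
    simp [n1, n2]
  by_cases h2 : y = {a, c}
  · subst h2
    have e1 : (({a, b, c} : Finset ℕ).filter
      fun v => ∃ w ∈ ({a, b, c} : Finset ℕ) \ {a, c}, v < w) = {a} := by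
      ext v; simp; constructor
      · rintro ⟨h, w, h', h''⟩; omega
      · rintro rfl; exact ⟨by simp, b, by omega, by omega⟩
    have : ({a, c} : Finset ℕ) ⊆ {a, b, c} := by intro; simp; omega
    rw [dd, if_pos ⟨this, by rw [h3, Finset.card_pair (by omega)]⟩, incSign, e1]
    simp [n1.symm, n3]
  by_cases h4 : y = {a, b}
  · subst h4
    have e1 : (({a, b, c} : Finset ℕ).filter
      fun v => ∃ w ∈ ({a, b, c} : Finset ℕ) \ {a, b}, v < w) = {a, b} := by
      ext v; simp; constructor
      · rintro ⟨h, w, h', h''⟩; omega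
      · rintro h; exact ⟨by omega, c, by omega, by omega⟩
    have : ({a, b} : Finset ℕ) ⊆ {a, b, c} := by intro; simp; omega
    rw [dd, if_pos ⟨this, by rw [h3, Finset.card_pair (by omega)]⟩, incSign, e1,
      Finset.card_pair (by omega)]
    simp [n2.symm, n3.symm]
  rw [if_neg h1, if_neg h2, if_neg h4, dd, if_neg]
  · simp
  rintro ⟨hs, hc⟩
  obtain ⟨u, w, huw, rfl⟩ := Finset.card_eq_two.mp (show y.card = 2 by omega)
  have hu : u ∈ ({a, b, c} : Finset ℕ) := hs (by simp)
  have hw : w ∈ ({a, b, c} : Finset ℕ) := hs (by simp)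
  simp only [Finset.mem_insert, Finset.mem_singleton] at hu hw
  rcases hu with rfl | rfl | rfl <;> rcases hw with rfl | rfl | rfl <;>
    simp_all [Finset.pair_comm]

lemma exists_edge {e : Finset ℕ} (h : e.card = 2) : ∃ a b, a < b ∧ e = {a, b} := by
  obtain ⟨a, b, hab, rfl⟩ := Finset.card_eq_two.mp h
  rcases lt_or_gt_of_ne hab with h | h
  · exact ⟨a, b, h, rfl⟩
  · exact ⟨b, a, h, Finset.pair_comm _ _⟩

lemma exists_tri {t : Finset ℕ} (h : t.card = 3) :
    ∃ a b c, a < b ∧ b < c ∧ t = {a, b, c} := by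
  have h' := h
  let f := t.orderEmbOfFin h
  refine ⟨f 0, f 1, f 2, f.strictMono (by decide), f.strictMono (by decide), ?_⟩
  have := Finset.image_orderEmbOfFin_univ t h
  have hu : (Finset.univ : Finset (Fin 3)) = {0, 1, 2} := by decide
  rw [hu, Finset.image_insert, Finset.image_insert, Finset.image_singleton] at this
  exact this.symm

lemma dd_dd (E : Finset (Finset ℕ)) (t y : Finset ℕ) (ht : t.card = 3)
    (hE : ∀ e ⊆ t, e.card = 2 → e ∈ E) :
    ∑ e : E, dd t e * dd e y = 0 := by
  obtain ⟨a, b, c, hab, hbc, rfl⟩ := exists_tri ht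
  have m1 : ({b, c} : Finset ℕ) ∈ E :=
    hE _ (by intro; simp; omega) (Finset.card_pair (by omega))
  have m2 : ({a, c} : Finset ℕ) ∈ E :=
    hE _ (by intro; simp; omega) (Finset.card_pair (by omega))
  have m3 : ({a, b} : Finset ℕ) ∈ E :=
    hE _ (by intro; simp; omega) (Finset.card_pair (by omega))
  rw [Finset.sum_coe_sort E (fun e => dd {a, b, c} e * dd e y)]
  simp only [dd_tri hab hbc, add_mul, sub_mul, ite_mul, one_mul, zero_mul,
    Finset.sum_add_distrib, Finset.sum_sub_distrib, Finset.sum_ite_eq', m1, m2, m3, if_true]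
  rw [dd_edge hab, dd_edge hbc, dd_edge (hab.trans hbc)]
  ring

/-- Kernel on vertices. -/
lemma ker_zero (A E V : Finset (Finset ℕ)) (h0 : ∅ ∉ A)
    (hE : E = A.filter fun x => x.card = 2) (hV : V = A.filter fun x => x.card = 1) :
    LinearMap.ker (bMat A V).mulVecLin = LinearMap.ker (dMat E V).mulVecLin := by
  ext f
  rw [mem_ker_bMat, mem_ker_dMat]
  have hc : ∀ y : V, y.1.card = 1 := fun y => by
    exact (Finset.mem_filter.mp (hV.subset y.2)).2
  constructor
  · intro h x hx
    rw [hE, Finset.mem_filter] at hx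
    rw [← h x hx.1]
    refine Finset.sum_congr rfl fun y _ => ?_
    rw [dd_eq_zero (x := y.1) (y := x) (by rw [hc, hx.2]; omega), add_zero]
  · intro h x hx
    have hx0 : x.card ≠ 0 := by
      rw [Finset.card_ne_zero]; apply Finset.nonempty_iff_ne_empty.mpr
      rintro rfl; exact h0 hx
    by_cases h2 : x.card = 2
    · rw [← h x (by rw [hE, Finset.mem_filter]; exact ⟨hx, h2⟩)]
      refine Finset.sum_congr rfl fun y _ => ?_
      rw [dd_eq_zero (x := y.1) (y := x) (by rw [hc, h2]; omega), add_zero]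
    · refine Finset.sum_eq_zero fun y _ => ?_
      rw [dd_eq_zero (x := y.1) (y := x) (by rw [hc]; omega),
        dd_eq_zero (x := x) (y := y.1) (by rw [hc]; omega)]
      ring

lemma ker_one (A T E V : Finset (Finset ℕ))
    (hT : T = A.filter fun x => x.card = 3)
    (hE : E = A.filter fun x => x.card = 2) (hV : V = A.filter fun x => x.card = 1) :
    LinearMap.ker (bMat A E).mulVecLin =
      LinearMap.ker (dMat T E).mulVecLin ⊓ LinearMap.ker (dMat E V)ᵀ.mulVecLin := by
  ext f
  rw [Submodule.mem_inf, mem_ker_bMat, mem_ker_dMat, mem_ker_dMatT]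
  have hc : ∀ y : E, y.1.card = 2 := fun y => by
    exact (Finset.mem_filter.mp (hE.subset y.2)).2
  have k3 : ∀ x : Finset ℕ, x.card = 3 → ∑ y : E, (dd x y + dd y x) * f y =
      ∑ y : E, dd x y * f y := fun x hx => by
    refine Finset.sum_congr rfl fun y _ => ?_
    rw [dd_eq_zero (x := y.1) (y := x) (by rw [hc, hx]; omega), add_zero]
  have k1 : ∀ x : Finset ℕ, x.card = 1 → ∑ y : E, (dd x y + dd y x) * f y =
      ∑ y : E, dd y x * f y := fun x hx => by
    refine Finset.sum_congr rfl fun y _ => ?_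
    rw [dd_eq_zero (x := x) (y := y.1) (by rw [hc, hx]; omega), zero_add]
  constructor
  · intro h
    constructor
    · intro x hx
      rw [hT, Finset.mem_filter] at hx
      rw [← k3 x hx.2, h x hx.1]
    · intro x hx
      rw [hV, Finset.mem_filter] at hx
      rw [← k1 x hx.2, h x hx.1]
  · rintro ⟨h3, h1⟩ x hx
    by_cases c3 : x.card = 3
    · rw [k3 x c3]
      exact h3 x (by rw [hT, Finset.mem_filter]; exact ⟨hx, c3⟩)
    by_cases c1 : x.card = 1
    · rw [k1 x c1]
      exact h1 x (by rw [hV, Finset.mem_filter]; exact ⟨hx, c1⟩)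
    refine Finset.sum_eq_zero fun y _ => ?_
    rw [dd_eq_zero (x := y.1) (y := x) (by rw [hc]; omega),
      dd_eq_zero (x := x) (y := y.1) (by rw [hc]; omega)]
    ring

lemma betti_one (A T E V : Finset (Finset ℕ)) (h0 : ∅ ∉ A)
    (hT : T = A.filter fun x => x.card = 3)
    (hE : E = A.filter fun x => x.card = 2) (hV : V = A.filter fun x => x.card = 1)
    (hdown : ∀ t ∈ A, t.card = 3 → ∀ e ⊆ t, e.card = 2 → e ∈ A) :
    betti A 1 + V.card =
      Module.finrank ℝ (LinearMap.ker (dMat T E).mulVecLin) + betti A 0 := by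
  rw [betti_eq A 1 E hE, betti_eq A 0 V hV, ker_zero A E V h0 hE hV, ker_one A T E V hT hE hV]
  have h1 := LinearMap.finrank_range_add_finrank_ker (dMat E V).mulVecLin
  rw [Module.finrank_fintype_fun_eq_card, Fintype.card_coe] at h1
  have h2 := finrank_split (LinearMap.ker (dMat T E).mulVecLin) (dMat E V) (by
    rintro _ ⟨f, rfl⟩
    have hz : dMat T E * dMat E V = 0 := by
      ext t y
      have ht := Finset.mem_filter.mp (hT.subset t.2)
      simp only [Matrix.mul_apply, dMat, Matrix.of_apply, Matrix.zero_apply]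
      apply dd_dd E _ _ ht.2
      intro e he hec
      rw [hE, Finset.mem_filter]
      exact ⟨hdown _ ht.1 ht.2 e he hec, hec⟩
    simp [LinearMap.mem_ker, Matrix.mulVec_mulVec, hz])
  rw [Matrix.rank] at h2
  omega

/-- **Removing finitely many vertices.** Let G be a connected complex (b_0(G) = 1), let
v 0, …, v (m-1) be m ≥ 1 distinct vertices of G, let K = {{v i}} be the corresponding
zero-dimensional subcomplex and U = G \ K. Then b_0(U) = 0, b_1(U) = b_1(G) + m - 1 and
b_p(U) = b_p(G) for p ≥ 2. -/
theorem betti_remove_vertices (G : Finset (Finset ℕ)) (hG : IsComplex G)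
    (hconn : betti G 0 = 1) (m : ℕ) (hm : 1 ≤ m) (v : Fin m → ℕ)
    (hv : Function.Injective v) (hvG : ∀ i, ({v i} : Finset ℕ) ∈ G) :
    betti (G \ Finset.univ.image fun i => ({v i} : Finset ℕ)) 0 = 0 ∧
      betti (G \ Finset.univ.image fun i => ({v i} : Finset ℕ)) 1 = betti G 1 + m - 1 ∧
      ∀ p, 2 ≤ p →
        betti (G \ Finset.univ.image fun i => ({v i} : Finset ℕ)) p = betti G p := by
  classical
  set K : Finset (Finset ℕ) := Finset.univ.image fun i => ({v i} : Finset ℕ) with hK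
  set U := G \ K with hU
  obtain ⟨-, h0, hsub⟩ := hG
  have hKc : ∀ x ∈ K, x.card = 1 := by
    intro x hx
    rw [hK, Finset.mem_image] at hx
    obtain ⟨i, -, rfl⟩ := hx
    simp
  have hKG : K ⊆ G := by
    intro x hx
    rw [hK, Finset.mem_image] at hx
    obtain ⟨i, -, rfl⟩ := hx
    exact hvG i
  have hUG : U ⊆ G := Finset.sdiff_subset
  have hKcard : K.card = m := by
    rw [hK, Finset.card_image_of_injective _ (fun i j h => hv (by simpa using h))]
    simp
  have hmemU : ∀ x ∈ G, x.card ≠ 1 → x ∈ U := fun x hx hc =>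
    Finset.mem_sdiff.mpr ⟨hx, fun h => hc (hKc x h)⟩
  have hfil : ∀ q, q ≠ 1 → (G.filter fun x => x.card = q) = U.filter fun x => x.card = q := by
    intro q hq
    ext x
    simp only [Finset.mem_filter]
    constructor
    · rintro ⟨a, b⟩; exact ⟨hmemU x a (by omega), b⟩
    · rintro ⟨a, b⟩; exact ⟨hUG a, b⟩
  have h0U : ∅ ∉ U := fun h => h0 (hUG h)
  set V := G.filter fun x => x.card = 1 with hV
  set W := U.filter fun x => x.card = 1 with hW
  set E := G.filter fun x => x.card = 2 with hE
  set T := G.filter fun x => x.card = 3 with hT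
  have hWV : W = V \ K := by
    ext x
    simp only [hW, hV, hU, Finset.mem_filter, Finset.mem_sdiff]
    tauto
  have hKV : K ⊆ V := fun x hx => Finset.mem_filter.mpr ⟨hKG hx, hKc x hx⟩
  have hVc : W.card + m = V.card := by
    rw [hWV, ← hKcard]; exact Finset.card_sdiff_add_card_eq_card hKV
  have hd : ∀ t ∈ G, t.card = 3 → ∀ e ⊆ t, e.card = 2 → e ∈ G := fun t ht _ e he hc =>
    hsub t ht e he (Finset.card_pos.mp (by omega))
  have hb0 : betti U 0 = 0 := by
    rw [betti_eq U 0 W hW, ker_zero U E W h0U (hfil 2 (by norm_num)) hW,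
      Submodule.finrank_eq_zero, Submodule.eq_bot_iff]
    intro f hf
    rw [mem_ker_dMat] at hf
    rw [betti_eq G 0 V hV, ker_zero G E V h0 hE hV] at hconn
    have hone : (fun _ => 1 : V → ℝ) ∈ LinearMap.ker (dMat E V).mulVecLin := by
      rw [mem_ker_dMat]
      intro e he
      rw [hE, Finset.mem_filter] at he
      obtain ⟨a, b, hab, rfl⟩ := exists_edge he.2
      have ma : ({a} : Finset ℕ) ∈ V :=
        Finset.mem_filter.mpr ⟨hsub _ he.1 _ (by simp) (by simp), by simp⟩
      have mb : ({b} : Finset ℕ) ∈ V :=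
        Finset.mem_filter.mpr ⟨hsub _ he.1 _ (by simp) (by simp), by simp⟩
      rw [Finset.sum_coe_sort V (fun y => dd {a, b} y * 1)]
      simp [dd_edge hab, Finset.sum_sub_distrib, ma, mb]
    let g : V → ℝ := fun x => if h : x.1 ∈ W then f ⟨x.1, h⟩ else 0
    have hg : g ∈ LinearMap.ker (dMat E V).mulVecLin := by
      rw [mem_ker_dMat]
      intro e he
      rw [← hf e he]
      let F : Finset ℕ → ℝ := fun x => dd e x * if h : x ∈ W then f ⟨x, h⟩ else 0
      have e1 : ∑ y : V, dd e y * g y = ∑ y ∈ V, F y := Finset.sum_coe_sort V F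
      have e2 : ∑ y : W, dd e y * f y = ∑ y ∈ W, F y := by
        rw [← Finset.sum_coe_sort W F]
        refine Finset.sum_congr rfl fun y _ => ?_
        simp [F]
      rw [e1, e2]
      symm
      apply Finset.sum_subset (by rw [hWV]; exact Finset.sdiff_subset)
      intro x _ hx
      simp [F, hx]
    obtain ⟨c, hc⟩ := (finrank_eq_one_iff_of_nonzero'
      (⟨_, hone⟩ : LinearMap.ker (dMat E V).mulVecLin) (by
        intro h
        have h' := congrFun (congrArg Subtype.val h)
          ⟨{v ⟨0, hm⟩}, Finset.mem_filter.mpr ⟨hvG _, by simp⟩⟩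
        simp at h')).mp hconn ⟨g, hg⟩
    have hc' : ∀ x : V, c = g x := fun x => by
      have := congrFun (congrArg Subtype.val hc) x
      simpa using this
    have hc0 : c = 0 := by
      have hk : ({v ⟨0, hm⟩} : Finset ℕ) ∈ K := by simp [hK]
      rw [hc' ⟨{v ⟨0, hm⟩}, hKV hk⟩]
      simp only [g]
      rw [dif_neg]
      rw [hWV]; simp [hk]
    funext x
    have hx : x.1 ∈ V := by
      exact (Finset.mem_sdiff.mp (hWV.subset x.2)).1
    have := hc' ⟨x.1, hx⟩
    simp only [g, x.2, dif_pos] at this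
    rw [Pi.zero_apply, ← hc0, this]
  refine ⟨hb0, ?_, ?_⟩
  · have i1 := betti_one G T E V h0 hT hE hV hd
    have i2 := betti_one U T E W h0U (hfil 3 (by norm_num)) (hfil 2 (by norm_num)) hW
      (fun t ht hc e he hec => hmemU e (hd t (hUG ht) hc e he hec) (by omega))
    omega
  · intro p hp
    set F := G.filter fun x => x.card = p + 1 with hF
    have hFc : ∀ y : F, y.1.card = p + 1 := fun y => (Finset.mem_filter.mp y.2).2
    have hk : LinearMap.ker (bMat U F).mulVecLin = LinearMap.ker (bMat G F).mulVecLin := by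
      ext f
      rw [mem_ker_bMat, mem_ker_bMat]
      refine ⟨fun h x hx => ?_, fun h x hx => h x (hUG hx)⟩
      by_cases hc : x.card = 1
      · refine Finset.sum_eq_zero fun y _ => ?_
        rw [dd_eq_zero (x := y.1) (y := x) (by rw [hFc]; omega),
          dd_eq_zero (x := x) (y := y.1) (by rw [hFc]; omega)]
        ring
      · exact h x (hmemU x hx hc)
    rw [betti_eq G p F hF, betti_eq U p F (hfil (p + 1) (by omega)), hk]
end
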